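/- arXiv:1611.09965 — 2 statements merged into one kernel-verified Lean document; each statement's English description precedes it below -/
import Mathlib

section
/- Let X be an analytic subset of a complete separable metric space and s > 0. If the s-dimensional Hausdorff measure of X is positive (possibly infinite), then there exist a Borel measure μ on X with 0 < μ(X) < ∞ and a constant c > 0 such that μ(B(x,r)) ≤ c·r^s for all x ∈ X and all r > 0. -/
open scoped ENNReal NNReal
open MeasureTheory Metric Set

/-
The Hausdorff content (covers of arbitrary diameter) vanishes exactly on the `μH[s]`-null sets, and
on a compact space it is bounded, up to the factor `5 ^ s`, by the infimum of the costs
`∑ B, w B * diam B ^ s` of the finite weighted covers `1 ≤ ∑ B, w B * 1_B`: clear denominators and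
split off disjoint subfamilies as in the Vitali covering lemma. That infimum extends to a sublinear
functional on continuous functions, so if the content is positive, the Hahn-Banach and Riesz
representation theorems give a nonzero measure with `ν E ≤ ediam E ^ s`.

It remains to find a compact subset of positive content in an analytic set of positive measure. If
some subset has positive finite `μH[s]` measure, this is Choquet's capacitability theorem for a
finite measure. Otherwise every set of finite measure is null, and then the content itself is a
capacity: from covers `u n` of `A n` (`A` increasing) of cost at most `M`, pass to limits `L i` of
the sets `u n i` along an ultrafilter. Whatever the `L i` miss lies in sets which are eventually
pairwise disjoint along the ultrafilter; it has finite measure, hence measure zero.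
-/

namespace Frostman

open Filter Topology

section Covering

variable {Z : Type*} [PseudoEMetricSpace Z]

/-- The points within distance twice the diameter of `S` from `S`: the analogue for an arbitrary
set of the fivefold dilation of a ball in the Vitali covering lemma. -/
def enlargement (S : Set Z) : Set Z := {x | ∃ y ∈ S, edist x y ≤ 2 * ediam S}

lemma ediam_enlargement_le (S : Set Z) : ediam (enlargement S) ≤ 5 * ediam S := by
  refine ediam_le ?_
  rintro x ⟨x', hx', hx⟩ y ⟨y', hy', hy⟩
  calc edist x y ≤ edist x x' + edist x' y' + edist y' y := edist_triangle4 _ _ _ _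
    _ ≤ 2 * ediam S + ediam S + 2 * ediam S := by
        gcongr
        · exact edist_le_ediam_of_mem hx' hy'
        · rwa [edist_comm]
    _ = 5 * ediam S := by ring

lemma ediam_enlargement_rpow_le {s : ℝ} (hs : 0 ≤ s) (S : Set Z) :
    ediam (enlargement S) ^ s ≤ 5 ^ s * ediam S ^ s := by
  rw [← ENNReal.mul_rpow_of_nonneg _ _ hs]
  exact ENNReal.rpow_le_rpow (ediam_enlargement_le S) hs

variable {ι : Type*} {B : ι → Set Z} {R : ℝ≥0∞}

lemma exists_disjoint_subfamily_subset_enlargement (hR : R ≠ ⊤) (hB : ∀ a, ediam (B a) ≤ R)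
    (T : Set ι) :
    ∃ u ⊆ T, u.PairwiseDisjoint B ∧ ⋃ a ∈ T, B a ⊆ ⋃ a ∈ u, enlargement (B a) := by
  have hfin : ∀ a, ediam (B a) ≠ ⊤ := fun a => ne_top_of_le_ne_top hR (hB a)
  obtain ⟨u, huT, hdisj, hu⟩ := Vitali.exists_disjoint_subfamily_covering_enlargement B
    {a ∈ T | (B a).Nonempty} (fun a => (ediam (B a)).toReal) 2 one_lt_two
    (fun _ _ => ENNReal.toReal_nonneg) R.toReal
    (fun a _ => ENNReal.toReal_mono hR (hB a)) (fun a ha => ha.2)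
  refine ⟨u, fun a ha => (huT ha).1, hdisj, iUnion₂_subset fun a ha x hx => ?_⟩
  obtain ⟨b, hb, ⟨y, hya, hyb⟩, hle⟩ := hu a ⟨ha, x, hx⟩
  refine mem_biUnion hb ⟨y, hyb, (edist_le_ediam_of_mem hx hya).trans ?_⟩
  rwa [← ENNReal.toReal_le_toReal (hfin a) (by finiteness [hfin b]), ENNReal.toReal_mul]

lemma tsum_mul_indicator_le_one_of_pairwiseDisjoint {α : Type*} {B : ι → Set α} {u : Set ι}
    (hu : u.PairwiseDisjoint B) (x : α) :
    ∑' a, u.indicator 1 a * (B a).indicator (1 : α → ℝ≥0∞) x ≤ 1 := by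
  by_cases h : ∃ a ∈ u, x ∈ B a
  · obtain ⟨a, ha, hxa⟩ := h
    rw [tsum_eq_single a]
    · simp [ha, hxa]
    · intro b hba
      by_contra hne
      obtain ⟨hb, hxb⟩ : b ∈ u ∧ x ∈ B b := by simpa using hne
      exact disjoint_left.1 (hu hb ha hba) hxb hxa
  · rw [ENNReal.tsum_eq_zero.2 fun a => ?_]
    · exact zero_le_one
    · by_contra hne
      exact h ⟨a, by simpa using hne⟩

/-- Removing a maximal disjoint subfamily once lowers the multiplicity of a cover by at most one at
every point. -/
lemma exists_remove_disjoint_subfamily (hR : R ≠ ⊤) (hB : ∀ a, ediam (B a) ≤ R) (n : ι → ℕ) :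
    ∃ (u : Set ι) (n' : ι → ℕ),
      {x | ∑' a, n a * (B a).indicator (1 : Z → ℝ≥0∞) x ≠ 0} ⊆ ⋃ a ∈ u, enlargement (B a) ∧
      (∀ w : ι → ℝ≥0∞, ∑' a, n a * w a = ∑' a, u.indicator w a + ∑' a, n' a * w a) ∧
      ∀ x, ∑' a, n a * (B a).indicator (1 : Z → ℝ≥0∞) x ≤
        1 + ∑' a, n' a * (B a).indicator (1 : Z → ℝ≥0∞) x := by
  obtain ⟨u, hun, hdisj, hu⟩ :=
    exists_disjoint_subfamily_subset_enlargement hR hB {a | n a ≠ 0}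
  have hn (a : ι) : (n a : ℝ≥0∞) = u.indicator 1 a + (n a - u.indicator 1 a : ℕ) := by
    by_cases ha : a ∈ u
    · have : 1 + (n a - 1) = n a := Nat.add_sub_of_le (Nat.one_le_iff_ne_zero.2 (hun ha))
      simp only [ha, indicator_of_mem, Pi.one_apply]
      exact_mod_cast this.symm
    · simp [ha]
  have hsum (w : ι → ℝ≥0∞) : ∑' a, n a * w a =
      ∑' a, u.indicator 1 a * w a + ∑' a, (n a - u.indicator 1 a : ℕ) * w a := by
    rw [← ENNReal.tsum_add]
    exact tsum_congr fun a => by rw [← add_mul, ← hn]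
  refine ⟨u, fun a => n a - u.indicator 1 a, fun x hx => hu ?_, fun w => ?_, fun x => ?_⟩
  · obtain ⟨a, ha⟩ : ∃ a, n a * (B a).indicator (1 : Z → ℝ≥0∞) x ≠ 0 := by
      by_contra! h
      exact hx (ENNReal.tsum_eq_zero.2 h)
    refine mem_biUnion (x := a) ?_ (mem_of_indicator_ne_zero (right_ne_zero_of_mul ha))
    simpa using left_ne_zero_of_mul ha
  · rw [hsum]
    congr! 3 with a
    rw [← indicator_mul_left]
    simp
  · rw [hsum]
    gcongr
    exact tsum_mul_indicator_le_one_of_pairwiseDisjoint hdisj x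

/-- If `B`, with `B a` counted `n a` times, covers `D` at least `m + 1` times, then one of `m + 1`
successively removed disjoint subfamilies carries at most the average of the weight `w`. -/
lemma exists_subfamily_enlargement_cover (hR : R ≠ ⊤) (hB : ∀ a, ediam (B a) ≤ R) {D : Set Z}
    (w : ι → ℝ≥0∞) (m : ℕ) (n : ι → ℕ)
    (hn : ∀ x ∈ D, m + 1 ≤ ∑' a, n a * (B a).indicator (1 : Z → ℝ≥0∞) x) :
    ∃ u : Set ι, D ⊆ ⋃ a ∈ u, enlargement (B a) ∧
      (m + 1) * ∑' a, u.indicator w a ≤ ∑' a, n a * w a := by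
  induction m generalizing n with
  | zero =>
    obtain ⟨u, n', hu, hsum, -⟩ := exists_remove_disjoint_subfamily hR hB n
    refine ⟨u, fun x hx => hu (one_pos.trans_le (by simpa using hn x hx)).ne', ?_⟩
    simp [hsum]
  | succ m ih =>
    obtain ⟨u, n', hu, hsum, hmul⟩ := exists_remove_disjoint_subfamily hR hB n
    obtain ⟨v, hv, hvw⟩ := ih n' fun x hx => by
      have := (hn x hx).trans (hmul x)
      rw [add_comm 1] at this
      exact (ENNReal.add_le_add_iff_right ENNReal.one_ne_top).1 (by exact_mod_cast this)
    have hu : D ⊆ ⋃ a ∈ u, enlargement (B a) := fun x hx =>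
      hu ((by positivity : (0 : ℝ≥0∞) < (m + 1 : ℕ) + 1).trans_le (hn x hx)).ne'
    rw [hsum, Nat.cast_add_one]
    rcases le_total (∑' a, u.indicator w a) (∑' a, v.indicator w a) with huv | hvu
    · refine ⟨u, hu, ?_⟩
      calc (m + 1 + 1 : ℝ≥0∞) * ∑' a, u.indicator w a
          = ∑' a, u.indicator w a + (m + 1) * ∑' a, u.indicator w a := by ring
        _ ≤ _ := by gcongr; exact (mul_le_mul_right huv _).trans hvw
    · refine ⟨v, hv, ?_⟩
      calc (m + 1 + 1 : ℝ≥0∞) * ∑' a, v.indicator w a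
          = ∑' a, v.indicator w a + (m + 1) * ∑' a, v.indicator w a := by ring
        _ ≤ _ := by gcongr

end Covering

section RadiusSlack

variable {s : ℝ}

lemma exists_lt_rpow_le_add (hs : 0 < s) {d δ : ℝ≥0∞} (hd : d ≠ ⊤) (hδ : δ ≠ 0) :
    ∃ r : ℝ≥0, d < r ∧ (r : ℝ≥0∞) ^ s ≤ d ^ s + δ := by
  have hlt : d ^ s < d ^ s + δ := ENNReal.lt_add_right (by finiteness) hδ
  have hd' : d < (d ^ s + δ) ^ s⁻¹ := (ENNReal.lt_rpow_inv_iff hs).2 hlt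
  obtain ⟨r, hdr, hr⟩ := ENNReal.lt_iff_exists_nnreal_btwn.1 hd'
  exact ⟨r, hdr, (ENNReal.le_rpow_inv_iff hs).1 hr.le⟩

lemma exists_ediam_thickening_rpow_le {Z : Type*} [PseudoEMetricSpace Z] (hs : 0 < s) (E : Set Z)
    {δ : ℝ≥0∞} (hδ : δ ≠ 0) :
    ∃ η > 0, ediam (thickening η E) ^ s ≤ ediam E ^ s + δ := by
  rcases eq_or_ne (ediam E) ⊤ with hE | hE
  · exact ⟨1, one_pos, by simp [hE, hs]⟩
  obtain ⟨r, hr, hrs⟩ := exists_lt_rpow_le_add hs hE hδ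
  obtain ⟨η, hη, hηr⟩ :=
    ENNReal.exists_nnreal_pos_mul_lt (ENNReal.ofNat_ne_top (n := 2)) (tsub_pos_of_lt hr).ne'
  refine ⟨η, hη, (ENNReal.rpow_le_rpow ?_ hs.le).trans hrs⟩
  calc ediam (thickening η E) ≤ ediam E + 2 * η := ediam_thickening_le η
    _ ≤ ediam E + (r - ediam E) := by gcongr; rw [mul_comm]; exact hηr.le
    _ = r := add_tsub_cancel_of_le hr.le

end RadiusSlack

section Content

variable {Z : Type*} [PseudoEMetricSpace Z] {s : ℝ}

/-- The `s`-dimensional Hausdorff content: the infimum of `∑' i, ediam (t i) ^ s` over all countable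
covers, with no bound on the diameters. Empty sets cost nothing even when `s ≤ 0`. -/
noncomputable def hausdorffContent (s : ℝ) : OuterMeasure Z :=
  OuterMeasure.boundedBy fun E => ediam E ^ s

lemma hausdorffContent_le_ediam_rpow (s : ℝ) (A : Set Z) :
    hausdorffContent s A ≤ ediam A ^ s :=
  OuterMeasure.boundedBy_le A

lemma hausdorffContent_le_tsum {ι : Type*} [Countable ι] {A : Set Z} {t : ι → Set Z}
    (hA : A ⊆ ⋃ i, t i) : hausdorffContent s A ≤ ∑' i, ediam (t i) ^ s :=
  (measure_mono hA).trans <| (measure_iUnion_le t).trans <|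
    ENNReal.tsum_le_tsum fun i => hausdorffContent_le_ediam_rpow s (t i)

lemma iSup_nonempty_ediam_rpow (hs : 0 < s) (E : Set Z) :
    ⨆ _ : E.Nonempty, ediam E ^ s = ediam E ^ s := by
  rcases E.eq_empty_or_nonempty with rfl | hE <;> simp [*]

lemma hausdorffContent_apply (hs : 0 < s) (A : Set Z) :
    hausdorffContent s A =
      ⨅ (t : ℕ → Set Z) (_ : A ⊆ ⋃ i, t i), ∑' i, ediam (t i) ^ s := by
  simp only [hausdorffContent, OuterMeasure.boundedBy_apply, iSup_nonempty_ediam_rpow hs]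

lemma hausdorffContent_lt_iff (hs : 0 < s) {A : Set Z} {c : ℝ≥0∞} :
    hausdorffContent s A < c ↔
      ∃ t : ℕ → Set Z, A ⊆ ⋃ i, t i ∧ ∑' i, ediam (t i) ^ s < c := by
  simp only [hausdorffContent_apply hs, iInf_lt_iff, exists_prop]

lemma exists_isOpen_hausdorffContent_lt (hs : 0 < s) {A : Set Z} {c : ℝ≥0∞}
    (hA : hausdorffContent s A < c) :
    ∃ W, IsOpen W ∧ A ⊆ W ∧ hausdorffContent s W < c := by
  obtain ⟨t, hAt, ht⟩ := (hausdorffContent_lt_iff hs).1 hA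
  obtain ⟨ε, hε, hεc⟩ := ENNReal.exists_pos_sum_of_countable' (tsub_pos_of_lt ht).ne' ℕ
  choose η hη htη using fun i => exists_ediam_thickening_rpow_le hs (t i) (hε i).ne'
  refine ⟨⋃ i, thickening (η i) (t i), isOpen_iUnion fun i => isOpen_thickening,
    hAt.trans (iUnion_mono fun i => self_subset_thickening (hη i) _), ?_⟩
  calc hausdorffContent s (⋃ i, thickening (η i) (t i))
      ≤ ∑' i, ediam (thickening (η i) (t i)) ^ s := hausdorffContent_le_tsum subset_rfl
    _ ≤ ∑' i, (ediam (t i) ^ s + ε i) := ENNReal.tsum_le_tsum htη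
    _ = ∑' i, ediam (t i) ^ s + ∑' i, ε i := ENNReal.tsum_add
    _ < c := by rw [add_comm]; exact lt_tsub_iff_right.1 hεc

lemma hausdorffContent_image_of_isometry {Y : Type*} [PseudoEMetricSpace Y] {f : Y → Z}
    (hf : Isometry f) (hs : 0 < s) (A : Set Y) :
    hausdorffContent s (f '' A) = hausdorffContent s A := by
  apply le_antisymm <;> refine le_of_forall_gt fun c hc => ?_
  · obtain ⟨t, hAt, ht⟩ := (hausdorffContent_lt_iff hs).1 hc
    refine (hausdorffContent_lt_iff hs).2 ⟨fun i => f '' t i, ?_, ?_⟩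
    · exact (image_mono hAt).trans (image_iUnion (f := f)).subset
    · simpa only [hf.ediam_image] using ht
  · obtain ⟨t, hAt, ht⟩ := (hausdorffContent_lt_iff hs).1 hc
    refine (hausdorffContent_lt_iff hs).2 ⟨fun i => f ⁻¹' t i, ?_, lt_of_le_of_lt ?_ ht⟩
    · rw [← preimage_iUnion]
      exact image_subset_iff.1 hAt
    · gcongr with i
      rw [← hf.ediam_image]
      exact ediam_mono (image_preimage_subset f _)

end Content

section HausdorffMeasure

variable {Z : Type*} [EMetricSpace Z] [MeasurableSpace Z] [BorelSpace Z] {s : ℝ}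

lemma hausdorffContent_le_hausdorffMeasure (hs : 0 < s) (A : Set Z) :
    hausdorffContent s A ≤ μH[s] A := by
  rw [Measure.hausdorffMeasure_apply]
  refine le_iSup₂_of_le 1 one_pos (le_iInf₂ fun t hAt => le_iInf fun _ => ?_)
  simp only [iSup_nonempty_ediam_rpow hs]
  exact hausdorffContent_le_tsum hAt

/-- A cover of cost at most `ε` automatically consists of sets of diameter at most `ε ^ s⁻¹`. -/
lemma hausdorffMeasure_eq_zero_of_hausdorffContent_eq_zero (hs : 0 < s) {A : Set Z}
    (hA : hausdorffContent s A = 0) : μH[s] A = 0 := by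
  have hcover (n : ℕ) : ∃ t : ℕ → Set Z, A ⊆ ⋃ i, t i ∧ ∑' i, ediam (t i) ^ s < (n : ℝ≥0∞)⁻¹ :=
    (hausdorffContent_lt_iff hs).1 (by simp [hA])
  choose t hAt ht using hcover
  have hdiam : Tendsto (fun n : ℕ => (n : ℝ≥0∞)⁻¹ ^ s⁻¹) atTop (𝓝 0) := by
    simpa [hs] using ENNReal.tendsto_inv_nat_nhds_zero.ennrpow_const s⁻¹
  have hcost : Tendsto (fun n => ∑' i, ediam (t n i) ^ s) atTop (𝓝 0) :=
    tendsto_of_tendsto_of_tendsto_of_le_of_le tendsto_const_nhds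
      ENNReal.tendsto_inv_nat_nhds_zero (fun _ => zero_le) fun n => (ht n).le
  refine nonpos_iff_eq_zero.1 <| hcost.liminf_eq ▸
    Measure.hausdorffMeasure_le_liminf_tsum (ι := fun _ => ℕ) s A _ hdiam t
      (Eventually.of_forall fun n i => ?_) (Eventually.of_forall hAt)
  exact (ENNReal.le_rpow_inv_iff hs).2 ((ENNReal.le_tsum i).trans (ht n).le)

end HausdorffMeasure

section OrderedCover

lemma injective_ncard_setOf_lt {α β : Type*} [LinearOrder β] {f : α → β}
    (hf : Function.Injective f) (hfin : ∀ a, {b | f b < f a}.Finite) :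
    Function.Injective fun a => {b | f b < f a}.ncard := by
  have hlt {a b : α} (hab : f a < f b) : {c | f c < f a}.ncard < {c | f c < f b}.ncard :=
    ncard_lt_ncard ⟨fun c hc => hc.trans hab, fun h => (h hab).false⟩ (hfin b)
  intro a b hab
  by_contra hne
  rcases lt_or_gt_of_ne (hf.ne hne) with h | h
  · exact (hlt h).ne hab
  · exact (hlt h).ne' hab

/-- `e` numbers the terms of the series in decreasing order. -/
lemma exists_injective_mul_le_tsum {a : ℕ → ℝ≥0∞} (ha : ∀ i, a i ≠ 0) (hsum : ∑' i, a i ≠ ⊤) :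
    ∃ e : ℕ → ℕ, Function.Injective e ∧ ∀ i, (e i + 1) * a i ≤ ∑' j, a j := by
  let key (i : ℕ) : ℝ≥0∞ᵒᵈ ×ₗ ℕ := toLex (OrderDual.toDual (a i), i)
  have hkey : Function.Injective key := fun i j hij => congrArg (fun p => (ofLex p).2) hij
  have hle {i j : ℕ} (hij : key j ≤ key i) : a i ≤ a j := Prod.Lex.monotone_fst _ _ hij
  have hfin (i : ℕ) : {j | key j < key i}.Finite :=
    (ENNReal.finite_const_le_of_tsum_ne_top hsum (ha i)).subset fun j hj => hle hj.le
  refine ⟨fun i => {j | key j < key i}.ncard, injective_ncard_setOf_lt hkey hfin, fun i => ?_⟩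
  have hi : i ∉ (hfin i).toFinset := by simp
  calc ({j | key j < key i}.ncard + 1) * a i
      = ∑ _j ∈ insert i (hfin i).toFinset, a i := by
        rw [Finset.sum_const, Finset.card_insert_of_notMem hi, ncard_eq_toFinset_card _ (hfin i)]
        simp
    _ ≤ ∑ j ∈ insert i (hfin i).toFinset, a j := by
        refine Finset.sum_le_sum fun j hj => ?_
        rcases Finset.mem_insert.1 hj with rfl | hj
        · exact le_rfl
        · exact hle ((hfin i).mem_toFinset.1 hj).le
    _ ≤ ∑' j, a j := ENNReal.sum_le_tsum _

variable {Z : Type*} [PseudoEMetricSpace Z] {s : ℝ}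

/-- Perturbing the costs by the geometric series `∑' i, 2⁻¹ ^ i = 2` makes them nonzero. -/
lemma exists_cover_mul_ediam_rpow_le (hs : 0 < s) {A : Set Z} {c : ℝ≥0∞} (hc : c ≠ ⊤)
    (hA : hausdorffContent s A < c) :
    ∃ t : ℕ → Set Z, A ⊆ ⋃ i, t i ∧ ∑' i, ediam (t i) ^ s ≤ c ∧
      ∀ i : ℕ, (i + 1) * ediam (t i) ^ s ≤ c + 2 := by
  obtain ⟨t, hAt, ht⟩ := (hausdorffContent_lt_iff hs).1 hA
  have hsum : ∑' i, (ediam (t i) ^ s + 2⁻¹ ^ i) ≤ c + 2 := by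
    rw [ENNReal.tsum_add, ENNReal.tsum_geometric, ENNReal.one_sub_inv_two, inv_inv]
    gcongr
  obtain ⟨e, he, hle⟩ := exists_injective_mul_le_tsum (a := fun i => ediam (t i) ^ s + 2⁻¹ ^ i)
    (by simp) (ne_top_of_le_ne_top (by finiteness) hsum)
  set t' := Function.extend e t fun _ => ∅
  have ht' (i : ℕ) : t' (e i) = t i := he.extend_apply _ _ i
  have ht'_empty {k : ℕ} (hk : k ∉ range e) : t' k = ∅ := Function.extend_apply' _ _ _ hk
  refine ⟨t', hAt.trans (iUnion_subset fun i => ?_), ?_, fun k => ?_⟩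
  · rw [← ht' i]
    exact subset_iUnion t' (e i)
  · rw [← he.tsum_eq]
    · simpa only [ht'] using ht.le
    · refine Function.support_subset_iff'.2 fun k hk => ?_
      simp [ht'_empty hk, hs]
  · by_cases hk : k ∈ range e
    · obtain ⟨i, rfl⟩ := hk
      calc (e i + 1) * ediam (t' (e i)) ^ s ≤ (e i + 1) * (ediam (t i) ^ s + 2⁻¹ ^ i) := by
            rw [ht']
            gcongr
            exact le_self_add
        _ ≤ c + 2 := (hle i).trans hsum
    · simp [ht'_empty hk, hs]

lemma tendsto_iSup_ediam_of_mul_ediam_rpow_le {β : Type*} (hs : 0 < s) {u : β → ℕ → Set Z}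
    {M : ℝ≥0∞} (hM : M ≠ ⊤) (hu : ∀ n (i : ℕ), (i + 1) * ediam (u n i) ^ s ≤ M) :
    Tendsto (fun i => ⨆ n, ediam (u n i)) atTop (𝓝 0) := by
  have hbound : Tendsto (fun i : ℕ => (M / (i + 1)) ^ s⁻¹) atTop (𝓝 0) := by
    have hdiv : Tendsto (fun i : ℕ => M / ((i + 1 : ℕ) : ℝ≥0∞)) atTop (𝓝 0) := by
      simpa only [ENNReal.div_top, Function.comp_def] using (ENNReal.Tendsto.const_div
        ENNReal.tendsto_nat_nhds_top (Or.inr hM)).comp (tendsto_add_atTop_nat 1)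
    simpa [hs] using hdiv.ennrpow_const s⁻¹
  refine tendsto_of_tendsto_of_tendsto_of_le_of_le tendsto_const_nhds hbound (fun _ => zero_le)
    fun i => iSup_le fun n => (ENNReal.le_rpow_inv_iff hs).2 ?_
  rw [ENNReal.le_div_iff_mul_le (by simp) (by simp), mul_comm]
  exact hu n i

end OrderedCover

section FiniteResidual

lemma exists_seq_of_eventually_eventually {β : Type*} {l : Filter β} [l.NeBot] {P : β → Prop}
    {r : β → β → Prop} (hP : ∀ᶠ m in l, P m) (hr : ∀ᶠ m in l, ∀ᶠ n in l, r m n) :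
    ∃ f : ℕ → β, (∀ k, P (f k)) ∧ ∀ j k, j < k → r (f j) (f k) := by
  obtain ⟨f, hf, hfr⟩ := exists_seq_of_forall_finset_exists (fun m => P m ∧ ∀ᶠ n in l, r m n) r
    fun F hF => ((hP.and hr).and <|
      (Filter.eventually_all_finset F).2 fun m hm => (hF m hm).2).exists
  exact ⟨f, fun k => (hf k).1, hfr⟩

/-- At most `N` of the covers `v j` use one of their first `N` members to cover `x`, since for each
`i < N` the `i`-th members are disjoint. -/
lemma card_le_add_tsum_indicator {κ α : Type*} [Fintype κ] {v : κ → ℕ → Set α} {x : α} {N : ℕ}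
    (hcov : ∀ j, x ∈ ⋃ i, v j i) (hdisj : ∀ i < N, univ.PairwiseDisjoint fun j => v j i) :
    (Fintype.card κ : ℝ≥0∞) ≤
      N + ∑' a : κ × ℕ, (v a.1 (a.2 + N)).indicator (1 : α → ℝ≥0∞) x := by
  have hrow (j : κ) : 1 ≤ ∑' i, (v j i).indicator (1 : α → ℝ≥0∞) x := by
    obtain ⟨i, hi⟩ := mem_iUnion.1 (hcov j)
    simpa [hi] using ENNReal.le_tsum (f := fun i => (v j i).indicator (1 : α → ℝ≥0∞) x) i
  have hcol (i : ℕ) (hi : i < N) : ∑ j, (v j i).indicator (1 : α → ℝ≥0∞) x ≤ 1 := by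
    simpa using tsum_mul_indicator_le_one_of_pairwiseDisjoint (hdisj i hi) x
  calc (Fintype.card κ : ℝ≥0∞)
      = ∑ _j : κ, 1 := by simp
    _ ≤ ∑ j, ∑' i, (v j i).indicator (1 : α → ℝ≥0∞) x := Finset.sum_le_sum fun j _ => hrow j
    _ = ∑ i ∈ Finset.range N, ∑ j, (v j i).indicator (1 : α → ℝ≥0∞) x +
          ∑ j, ∑' i, (v j (i + N)).indicator (1 : α → ℝ≥0∞) x := by
        rw [Finset.sum_comm, ← Finset.sum_add_distrib]
        exact Finset.sum_congr rfl fun j _ => (ENNReal.summable.sum_add_tsum_nat_add').symm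
    _ ≤ N + ∑' a : κ × ℕ, (v a.1 (a.2 + N)).indicator (1 : α → ℝ≥0∞) x := by
        rw [ENNReal.tsum_prod', tsum_fintype]
        gcongr
        simpa using Finset.sum_le_sum fun i hi => hcol i (Finset.mem_range.1 hi)

lemma le_tsum_indicator_of_disjoint {α : Type*} {N : ℕ} {v : Fin (2 * N) → ℕ → Set α} {D : Set α}
    (hcov : ∀ j, D ⊆ ⋃ i, v j i)
    (hdisj : ∀ j k, j < k → ∀ i < N, Disjoint (D ∩ v j i) (v k i)) {x : α} (hx : x ∈ D) :
    N ≤ ∑' a : Fin (2 * N) × ℕ, (v a.1 (a.2 + N)).indicator (1 : α → ℝ≥0∞) x := by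
  have h := card_le_add_tsum_indicator (x := x) (N := N) (v := fun j i => D ∩ v j i)
    (fun j => inter_iUnion D _ ▸ ⟨hx, hcov j hx⟩) fun i hi => ?_
  · rw [Fintype.card_fin, Nat.cast_mul, Nat.cast_two, two_mul] at h
    simpa [hx, ← indicator_indicator] using
      (ENNReal.add_le_add_iff_left (ENNReal.natCast_ne_top N)).1 h
  · have hlt {j k : Fin (2 * N)} (hjk : j < k) : Disjoint (D ∩ v j i) (D ∩ v k i) :=
      (hdisj j k hjk i hi).mono_right inter_subset_right
    exact fun j _ k _ hjk => (lt_or_gt_of_ne hjk).elim hlt fun h => (hlt h).symm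

variable {Z β : Type*} {l : Filter β} [l.NeBot] {s : ℝ} {u : β → ℕ → Set Z} {D : Set Z} {M : ℝ≥0∞}

lemma exists_fine_cover_of_eventually_disjoint [PseudoEMetricSpace Z] (hs : 0 < s)
    (hcov : ∀ᶠ n in l, D ⊆ ⋃ i, u n i) (hsum : ∀ n, ∑' i, ediam (u n i) ^ s ≤ M)
    (hsmall : Tendsto (fun i => ⨆ n, ediam (u n i)) atTop (𝓝 0))
    (hdisj : ∀ i, ∀ᶠ m in l, ∀ᶠ n in l, Disjoint (D ∩ u m i) (u n i))
    {δ : ℝ≥0∞} (hδ : δ ≠ 0) (hδ' : δ ≠ ⊤) :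
    ∃ (m : ℕ) (t : Fin m × ℕ → Set Z), D ⊆ ⋃ a, t a ∧ (∀ a, ediam (t a) ≤ 5 * δ) ∧
      ∑' a, ediam (t a) ^ s ≤ 5 ^ s * (2 * M) := by
  obtain ⟨m, hm⟩ := eventually_atTop.1 (hsmall.eventually_le_const (pos_iff_ne_zero.2 hδ))
  obtain ⟨f, hf, hfdisj⟩ := exists_seq_of_eventually_eventually
    (r := fun j k => ∀ i < m + 1, Disjoint (D ∩ u j i) (u k i)) hcov <| by
      have := (Filter.eventually_all_finite (finite_lt_nat (m + 1))).2 fun i _ => hdisj i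
      filter_upwards [this] with j hj
      exact (Filter.eventually_all_finite (finite_lt_nat (m + 1))).2 hj
  let B (a : Fin (2 * (m + 1)) × ℕ) : Set Z := u (f a.1) (a.2 + (m + 1))
  have hB (a : Fin (2 * (m + 1)) × ℕ) : ediam (B a) ≤ δ :=
    (le_iSup (fun n => ediam (u n _)) _).trans (hm _ (by lia))
  have hmul (x : Z) (hx : x ∈ D) :
      m + 1 ≤ ∑' a, (1 : ℕ) * (B a).indicator (1 : Z → ℝ≥0∞) x := by
    simpa [B] using le_tsum_indicator_of_disjoint (N := m + 1)
      (v := fun j : Fin (2 * (m + 1)) => u (f j)) (fun j => hf j)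
      (fun j k hjk => hfdisj j k hjk) hx
  obtain ⟨v, hDv, hv⟩ := exists_subfamily_enlargement_cover hδ' hB (fun a => ediam (B a) ^ s) m
    (fun _ => 1) hmul
  refine ⟨_, fun a => ⋃ _ : a ∈ v, enlargement (B a), hDv, fun a => ?_, ?_⟩
  · by_cases ha : a ∈ v
    · simpa [ha] using (ediam_enlargement_le _).trans (mul_le_mul_right (hB a) 5)
    · simp [ha]
  have hcost : ∑' a, ediam (B a) ^ s ≤ 2 * (m + 1) * M := by
    rw [ENNReal.tsum_prod', tsum_fintype]
    calc ∑ j, ∑' i, ediam (B (j, i)) ^ s ≤ ∑ _j : Fin (2 * (m + 1)), M :=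
          Finset.sum_le_sum fun j _ => (ENNReal.tsum_comp_le_tsum_of_injective
            (add_left_injective (m + 1)) fun i => ediam (u (f j) i) ^ s).trans (hsum _)
      _ = 2 * (m + 1) * M := by simp
  calc ∑' a, ediam (⋃ _ : a ∈ v, enlargement (B a)) ^ s
      ≤ ∑' a, 5 ^ s * v.indicator (fun a => ediam (B a) ^ s) a := by
        gcongr with a
        by_cases ha : a ∈ v
        · simpa [ha] using ediam_enlargement_rpow_le hs.le (B a)
        · simp [ha, hs]
    _ = 5 ^ s * ∑' a, v.indicator (fun a => ediam (B a) ^ s) a := ENNReal.tsum_mul_left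
    _ ≤ 5 ^ s * (2 * M) := by
        gcongr
        rw [← ENNReal.mul_le_mul_iff_right (a := m + 1) (by simp) (by finiteness)]
        refine (hv.trans ?_).trans (hcost.trans_eq (by ring))
        simp

lemma hausdorffMeasure_le_of_eventually_disjoint [EMetricSpace Z] [MeasurableSpace Z]
    [BorelSpace Z] (hs : 0 < s) (hcov : ∀ᶠ n in l, D ⊆ ⋃ i, u n i)
    (hsum : ∀ n, ∑' i, ediam (u n i) ^ s ≤ M)
    (hsmall : Tendsto (fun i => ⨆ n, ediam (u n i)) atTop (𝓝 0))
    (hdisj : ∀ i, ∀ᶠ m in l, ∀ᶠ n in l, Disjoint (D ∩ u m i) (u n i)) :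
    μH[s] D ≤ 5 ^ s * (2 * M) := by
  have hδ : Tendsto (fun k : ℕ => 5 * ((k + 1 : ℕ) : ℝ≥0∞)⁻¹) atTop (𝓝 0) := by
    simpa using ENNReal.Tendsto.const_mul (a := 5)
      (ENNReal.tendsto_inv_nat_nhds_zero.comp (tendsto_add_atTop_nat 1)) (Or.inr (by simp))
  choose m t hDt htd hts using fun k : ℕ => exists_fine_cover_of_eventually_disjoint hs hcov hsum
    hsmall hdisj (δ := ((k + 1 : ℕ) : ℝ≥0∞)⁻¹) (by simp) (by simp)
  refine (Measure.hausdorffMeasure_le_liminf_tsum s D _ hδ t (Eventually.of_forall htd)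
    (Eventually.of_forall hDt)).trans (liminf_le_of_frequently_le' ?_)
  exact Frequently.of_forall hts

end FiniteResidual

section LimitCover

/-- The lower limit in the sense of Kuratowski of a family of sets along a filter: the points all of
whose neighbourhoods eventually meet the sets. -/
def lowerLimit {Z β : Type*} [TopologicalSpace Z] (l : Filter β) (t : β → Set Z) : Set Z :=
  {x | ∀ V ∈ 𝓝 x, ∀ᶠ n in l, (V ∩ t n).Nonempty}

lemma ediam_lowerLimit_le {Z β : Type*} [PseudoEMetricSpace Z] {l : Filter β} [l.NeBot]
    {t : β → Set Z} {d : ℝ≥0∞} (hd : Tendsto (fun n => ediam (t n)) l (𝓝 d)) :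
    ediam (lowerLimit l t) ≤ d := by
  refine ediam_le fun x hx y hy => le_of_forall_lt fun c hc => ?_
  obtain ⟨c', hcc', hc'⟩ := exists_between hc
  obtain ⟨V, hV, W, hW, hVW⟩ := mem_nhds_prod_iff.1 <|
    (continuous_edist.tendsto (x, y)).eventually (lt_mem_nhds hc')
  refine hcc'.trans_le (ge_of_tendsto hd ?_)
  filter_upwards [hx V hV, hy W hW] with n ⟨a, haV, hat⟩ ⟨b, hbW, hbt⟩
  exact (hVW (mk_mem_prod haV hbW)).le.trans (edist_le_ediam_of_mem hat hbt)

lemma exists_superset_or_eventually_disjoint {Z β : Type*} [PseudoEMetricSpace Z]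
    {U : Ultrafilter β} {t : β → Set Z} {r : ℝ≥0} (hr : ∀ᶠ n in U, ediam (t n) < r) :
    ∃ C, ediam C ≤ 3 * r ∧
      ((∀ᶠ n in U, t n ⊆ C) ∨ ∀ᶠ m in U, ∀ᶠ n in U, Disjoint (t m) (t n)) := by
  by_cases h : ∃ m, ediam (t m) < r ∧ ∀ᶠ n in U, ¬ Disjoint (t m) (t n)
  · obtain ⟨m, hm, hmeet⟩ := h
    refine ⟨thickening r (t m), (ediam_thickening_le r).trans ?_, Or.inl ?_⟩
    · calc ediam (t m) + 2 * r ≤ r + 2 * r := by gcongr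
        _ = 3 * r := by ring
    · filter_upwards [hmeet, hr] with n hmn hn y hy
      obtain ⟨a, ham, han⟩ := not_disjoint_iff.1 hmn
      rw [mem_thickening_iff_exists_edist_lt]
      exact ⟨a, ham, by simpa using (edist_le_ediam_of_mem hy han).trans_lt hn⟩
  · refine ⟨∅, by simp, Or.inr ?_⟩
    filter_upwards [hr] with m hm
    by_contra hmeet
    exact h ⟨m, hm, Ultrafilter.eventually_not.2 hmeet⟩

lemma tsum_le_of_tendsto {β : Type*} {l : Filter β} [l.NeBot] {a : β → ℕ → ℝ≥0∞} {b : ℕ → ℝ≥0∞}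
    {c : β → ℝ≥0∞} {M : ℝ≥0∞} (ha : ∀ i, Tendsto (fun n => a n i) l (𝓝 (b i)))
    (hc : Tendsto c l (𝓝 M)) (hac : ∀ n, ∑' i, a n i ≤ c n) : ∑' i, b i ≤ M := by
  rw [ENNReal.tsum_eq_iSup_sum]
  exact iSup_le fun F => le_of_tendsto_of_tendsto' (tendsto_finsetSum F fun i _ => ha i) hc
    fun n => (ENNReal.sum_le_tsum F).trans (hac n)

variable {Z β : Type*} [EMetricSpace Z] [MeasurableSpace Z] [BorelSpace Z]
  [SecondCountableTopology Z] {s : ℝ} {M : ℝ≥0∞}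

lemma hausdorffMeasure_eq_zero_of_locally_eventually_disjoint {l : Filter β} [l.NeBot]
    {u : β → ℕ → Set Z} {D : Set Z} (hs : 0 < s)
    (h0 : ∀ S : Set Z, μH[s] S < ⊤ → μH[s] S = 0) (hM : M ≠ ⊤)
    (hcov : ∀ᶠ n in l, D ⊆ ⋃ i, u n i) (hsum : ∀ n, ∑' i, ediam (u n i) ^ s ≤ M)
    (hsmall : Tendsto (fun i => ⨆ n, ediam (u n i)) atTop (𝓝 0))
    (hdisj : ∀ x ∈ D, ∃ O ∈ 𝓝[D] x, ∀ i, ∀ᶠ m in l, ∀ᶠ n in l,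
      Disjoint (O ∩ u m i) (u n i)) :
    μH[s] D = 0 := by
  refine measure_null_of_locally_null D fun x hx => ?_
  obtain ⟨O, hO, hOu⟩ := hdisj x hx
  have hfin : 5 ^ s * (2 * M) < ⊤ := by finiteness
  refine ⟨O ∩ D, inter_mem hO self_mem_nhdsWithin, h0 _ (lt_of_le_of_lt
    (hausdorffMeasure_le_of_eventually_disjoint (l := l) hs ?_ hsum hsmall fun i => ?_) hfin)⟩
  · filter_upwards [hcov] with n hn using inter_subset_right.trans hn
  · filter_upwards [hOu i] with m hm
    filter_upwards [hm] with n hn using hn.mono_left (by gcongr; exact inter_subset_left)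

variable {U : Ultrafilter β} {u : β → ℕ → Set Z}

lemma hausdorffMeasure_sdiff_lowerLimit_union_eq_zero (hs : 0 < s)
    (h0 : ∀ S : Set Z, μH[s] S < ⊤ → μH[s] S = 0) (hM : M ≠ ⊤) {A : Set Z} {C : ℕ → Set Z}
    (hcov : ∀ᶠ n in U, A ⊆ ⋃ i, u n i) (hsum : ∀ n, ∑' i, ediam (u n i) ^ s ≤ M)
    (hsmall : Tendsto (fun i => ⨆ n, ediam (u n i)) atTop (𝓝 0))
    (hC : ∀ i, (∀ᶠ n in U, u n i ⊆ C i) ∨ ∀ᶠ m in U, ∀ᶠ n in U, Disjoint (u m i) (u n i)) (I : ℕ) :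
    μH[s] (A \ ((⋃ i ∈ Finset.range I, lowerLimit U fun n => u n i) ∪ ⋃ i, C (i + I))) = 0 := by
  refine hausdorffMeasure_eq_zero_of_locally_eventually_disjoint (l := (U : Filter β)) (u := u)
    hs h0 hM ?_ hsum hsmall fun x ⟨_, hx⟩ => ?_
  · filter_upwards [hcov] with n hn using sdiff_subset.trans hn
  have hfar (i : ℕ) (hi : i < I) : ∃ V ∈ 𝓝 x, ∀ᶠ n in U, Disjoint V (u n i) := by
    have : x ∉ lowerLimit U fun n => u n i := fun h =>
      hx (Or.inl (mem_biUnion (Finset.mem_coe.2 (Finset.mem_range.2 hi)) h))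
    simpa only [lowerLimit, mem_ofPred_eq, not_forall, exists_prop, ← Ultrafilter.eventually_not,
      not_nonempty_iff_eq_empty, ← disjoint_iff_inter_eq_empty] using this
  choose! V hV hVu using hfar
  refine ⟨(⋂ i < I, V i) ∩ _, inter_mem (mem_nhdsWithin_of_mem_nhds
    ((Filter.biInter_mem (finite_lt_nat I)).2 hV)) self_mem_nhdsWithin, fun i => ?_⟩
  rcases lt_or_ge i I with hi | hi
  · refine Eventually.of_forall fun m => (hVu i hi).mono fun n hn => hn.mono_left ?_
    exact inter_subset_left.trans (inter_subset_left.trans (biInter_subset_of_mem hi))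
  rcases hC i with htrap | hescape
  · filter_upwards [htrap] with m hm
    refine Eventually.of_forall fun n => disjoint_left.2 ?_
    rintro y ⟨⟨-, -, hy⟩, hyu⟩ -
    refine hy (Or.inr (mem_iUnion.2 ⟨i - I, ?_⟩))
    rw [Nat.sub_add_cancel hi]
    exact hm hyu
  · filter_upwards [hescape] with m hm
    filter_upwards [hm] with n hn using hn.mono_left inter_subset_right

variable {d : ℕ → ℝ≥0∞} {A : ℕ → Set Z}

lemma hausdorffContent_iUnion_le_sum_add_tsum (hs : 0 < s)
    (h0 : ∀ S : Set Z, μH[s] S < ⊤ → μH[s] S = 0) (hM : M ≠ ⊤)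
    (hcov : ∀ p, ∀ᶠ n in U, A p ⊆ ⋃ i, u n i) (hsum : ∀ n, ∑' i, ediam (u n i) ^ s ≤ M)
    (hsmall : Tendsto (fun i => ⨆ n, ediam (u n i)) atTop (𝓝 0))
    (hd : ∀ i, Tendsto (fun n => ediam (u n i)) U (𝓝 (d i))) {r : ℕ → ℝ≥0} (hr : ∀ i, d i < r i)
    (I : ℕ) :
    hausdorffContent s (⋃ p, A p) ≤
      ∑ i ∈ Finset.range I, d i ^ s + ∑' i, (3 * r (i + I) : ℝ≥0∞) ^ s := by
  choose C hCr hC using fun i =>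
    exists_superset_or_eventually_disjoint ((hd i).eventually_lt_const (hr i))
  let L (i : ℕ) : Set Z := lowerLimit U fun n => u n i
  let W : Set Z := (⋃ i ∈ Finset.range I, L i) ∪ ⋃ i, C (i + I)
  have hnull : hausdorffContent s ((⋃ p, A p) \ W) = 0 := by
    rw [iUnion_sdiff, measure_iUnion_null_iff]
    exact fun p => nonpos_iff_eq_zero.1 <| (hausdorffContent_le_hausdorffMeasure hs _).trans_eq
      (hausdorffMeasure_sdiff_lowerLimit_union_eq_zero hs h0 hM (hcov p) hsum hsmall hC I)
  calc hausdorffContent s (⋃ p, A p)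
      ≤ hausdorffContent s W := by
        refine (measure_le_inter_add_sdiff _ _ W).trans ?_
        rw [hnull, add_zero]
        exact measure_mono inter_subset_right
    _ ≤ ∑ i ∈ Finset.range I, hausdorffContent s (L i) + ∑' i, hausdorffContent s (C (i + I)) :=
        (measure_union_le _ _).trans
          (add_le_add (measure_biUnion_finset_le _ _) (measure_iUnion_le _))
    _ ≤ ∑ i ∈ Finset.range I, d i ^ s + ∑' i, (3 * r (i + I) : ℝ≥0∞) ^ s := by
        gcongr with i _ i
        · exact (hausdorffContent_le_ediam_rpow s _).trans
            (ENNReal.rpow_le_rpow (ediam_lowerLimit_le (hd i)) hs.le)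
        · exact (hausdorffContent_le_ediam_rpow s _).trans
            (ENNReal.rpow_le_rpow (hCr (i + I)) hs.le)

lemma hausdorffContent_iUnion_le_tsum_limit (hs : 0 < s)
    (h0 : ∀ S : Set Z, μH[s] S < ⊤ → μH[s] S = 0) (hM : M ≠ ⊤)
    (hcov : ∀ p, ∀ᶠ n in U, A p ⊆ ⋃ i, u n i) (hsum : ∀ n, ∑' i, ediam (u n i) ^ s ≤ M)
    (hsmall : Tendsto (fun i => ⨆ n, ediam (u n i)) atTop (𝓝 0))
    (hd : ∀ i, Tendsto (fun n => ediam (u n i)) U (𝓝 (d i))) :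
    hausdorffContent s (⋃ p, A p) ≤ ∑' i, d i ^ s := by
  have hdM : ∑' i, d i ^ s ≤ M :=
    tsum_le_of_tendsto (fun i => (hd i).ennrpow_const s) tendsto_const_nhds hsum
  have hdtop (i : ℕ) : d i ≠ ⊤ := fun h => hM <| top_le_iff.1 <| by
    simpa [h, hs] using (ENNReal.le_tsum i).trans hdM
  obtain ⟨ε, hε, hεsum⟩ := ENNReal.exists_pos_sum_of_countable' one_ne_zero ℕ
  choose r hr hrs using fun i => exists_lt_rpow_le_add hs (hdtop i) (hε i).ne'
  have htail (I : ℕ) : ∑' i, (3 * r (i + I) : ℝ≥0∞) ^ s ≤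
      3 ^ s * (∑' i, d (i + I) ^ s + ∑' i, ε (i + I)) := by
    rw [← ENNReal.tsum_add, ← ENNReal.tsum_mul_left]
    gcongr with i
    rw [ENNReal.mul_rpow_of_nonneg _ _ hs.le]
    gcongr
    exact hrs (i + I)
  have hlim : Tendsto (fun I => ∑' i, d i ^ s + 3 ^ s * (∑' i, d (i + I) ^ s + ∑' i, ε (i + I)))
      atTop (𝓝 (∑' i, d i ^ s + 3 ^ s * (0 + 0))) :=
    tendsto_const_nhds.add <| ENNReal.Tendsto.const_mul
      ((ENNReal.tendsto_sum_nat_add _ (ne_top_of_le_ne_top hM hdM)).add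
        (ENNReal.tendsto_sum_nat_add _ hεsum.ne_top)) (Or.inr (by finiteness))
  rw [add_zero, mul_zero, add_zero] at hlim
  exact ge_of_tendsto' hlim fun I =>
    (hausdorffContent_iUnion_le_sum_add_tsum hs h0 hM hcov hsum hsmall hd hr I).trans
      (add_le_add (ENNReal.sum_le_tsum _) (htail I))

/-- The covers of the `A n` converge along an ultrafilter to a cover of the union. -/
lemma hausdorffContent_iUnion_le_of_monotone (hs : 0 < s)
    (h0 : ∀ S : Set Z, μH[s] S < ⊤ → μH[s] S = 0) (hA : Monotone A)
    (hAM : ∀ n, hausdorffContent s (A n) ≤ M) : hausdorffContent s (⋃ n, A n) ≤ M := by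
  rcases eq_or_ne M ⊤ with rfl | hM
  · exact le_top
  have hlt (n : ℕ) : hausdorffContent s (A n) < M + ((n + 1 : ℕ) : ℝ≥0∞)⁻¹ :=
    (hAM n).trans_lt (ENNReal.lt_add_right hM (by simp))
  choose u hu hsum hmul using fun n =>
    exists_cover_mul_ediam_rpow_le hs (by finiteness) (hlt n)
  have hle (n : ℕ) : M + ((n + 1 : ℕ) : ℝ≥0∞)⁻¹ ≤ M + 1 := by
    gcongr
    simp
  have hsmall : Tendsto (fun i => ⨆ n, ediam (u n i)) atTop (𝓝 0) :=
    tendsto_iSup_ediam_of_mul_ediam_rpow_le hs (M := M + 1 + 2) (by finiteness) fun n i =>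
      (hmul n i).trans (add_le_add (hle n) le_rfl)
  have hU : (hyperfilter ℕ : Filter ℕ) ≤ atTop := Nat.cofinite_eq_atTop ▸ hyperfilter_le_cofinite
  have hlim (i : ℕ) : ∃ d, Tendsto (fun n => ediam (u n i)) (hyperfilter ℕ) (𝓝 d) := by
    obtain ⟨d, -, hd⟩ := isCompact_univ.ultrafilter_le_nhds
      ((hyperfilter ℕ).map fun n => ediam (u n i)) (by simp)
    exact ⟨d, hd⟩
  choose d hd using hlim
  have hbound : Tendsto (fun n : ℕ => M + ((n + 1 : ℕ) : ℝ≥0∞)⁻¹) (hyperfilter ℕ) (𝓝 M) := by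
    simpa using (tendsto_const_nhds (x := M)).add
      ((ENNReal.tendsto_inv_nat_nhds_zero.comp (tendsto_add_atTop_nat 1)).mono_left hU)
  calc hausdorffContent s (⋃ n, A n) ≤ ∑' i, d i ^ s :=
        hausdorffContent_iUnion_le_tsum_limit hs h0 (M := M + 1) (by finiteness)
          (fun p => hU ((eventually_ge_atTop p).mono fun n hn => (hA hn).trans (hu n)))
          (fun n => (hsum n).trans (hle n)) hsmall hd
    _ ≤ M := tsum_le_of_tendsto (fun i => (hd i).ennrpow_const s) hbound hsum

end LimitCover

section Capacity

lemma exists_forall_truncated_box {P : Set (ℕ → ℕ) → Prop}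
    (hP : ∀ A : ℕ → Set (ℕ → ℕ), Monotone A → P (⋃ n, A n) → ∃ n, P (A n)) (huniv : P univ) :
    ∃ k : ℕ → ℕ, ∀ j, P {x | ∀ i < j, x i ≤ k i} := by
  have hstep (j : ℕ) (S : Set (ℕ → ℕ)) (hS : P S) : ∃ n, P (S ∩ {x | x j ≤ n}) := by
    refine hP (fun n => S ∩ {x | x j ≤ n})
      (fun n m hnm => inter_subset_inter_right S fun x hx => le_trans hx hnm) ?_
    rwa [← inter_iUnion, iUnion_eq_univ_iff.2 fun x => ⟨x j, le_refl (x j)⟩, inter_univ]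
  choose! n hn using hstep
  let S (j : ℕ) : Set (ℕ → ℕ) := Nat.rec univ (fun j S => S ∩ {x | x j ≤ n j S}) j
  have hS (j : ℕ) : S j = {x | ∀ i < j, x i ≤ n i (S i)} := by
    induction j with
    | zero => simp [S]
    | succ j ih =>
      ext x
      rw [show S (j + 1) = S j ∩ {x | x j ≤ n j (S j)} from rfl]
      nth_rw 1 [ih]
      simp only [mem_inter_iff, mem_ofPred_eq, Nat.forall_lt_succ_right]
  refine ⟨fun i => n i (S i), fun j => hS j ▸ ?_⟩
  induction j with
  | zero => exact huniv
  | succ j ih => exact hn j (S j) ih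

lemma isCompact_Iic_nat_pi (k : ℕ → ℕ) : IsCompact (Iic k) :=
  Icc_bot (a := k) ▸ isCompact_Icc

lemma exists_truncated_box_subset {k : ℕ → ℕ} {O : Set (ℕ → ℕ)} (hO : IsOpen O)
    (hk : Iic k ⊆ O) : ∃ j, {x | ∀ i < j, x i ≤ k i} ⊆ O := by
  have hcyl (x : ℕ → ℕ) (hx : x ∈ Iic k) : ∃ j, PiNat.cylinder x j ⊆ O := by
    obtain ⟨_, ⟨y, j, rfl⟩, hxy, hyO⟩ := (PiNat.isTopologicalBasis_cylinders
      fun _ : ℕ => ℕ).mem_nhds_iff.1 (hO.mem_nhds (hk hx))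
    exact ⟨j, by rwa [PiNat.mem_cylinder_iff_eq.1 hxy]⟩
  choose! J hJ using hcyl
  obtain ⟨F, hF, hcov⟩ := (isCompact_Iic_nat_pi k).elim_nhds_subcover
    (fun x => PiNat.cylinder x (J x))
    fun x _ => (PiNat.isOpen_cylinder _ x _).mem_nhds (PiNat.self_mem_cylinder x _)
  refine ⟨F.sup J, fun y hy => ?_⟩
  obtain ⟨x, hxF, hx⟩ := mem_iUnion₂.1 (hcov (inf_le_right : y ⊓ k ≤ k))
  refine hJ x (hF x hxF) fun i hi => ?_
  rw [← hx i hi]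
  exact (min_eq_left (hy i (hi.trans_le (Finset.le_sup hxF)))).symm

/-- Choquet's capacitability theorem for continuous images of Baire space. -/
lemma exists_isCompact_le_of_lt_range {Z : Type*} [TopologicalSpace Z] {φ : Set Z → ℝ≥0∞}
    (hmono : Monotone φ)
    (hbelow : ∀ c (A : ℕ → Set Z), Monotone A → (∀ n, φ (A n) ≤ c) → φ (⋃ n, A n) ≤ c)
    (houter : ∀ K c, φ K < c → ∃ W, IsOpen W ∧ K ⊆ W ∧ φ W < c)
    {f : (ℕ → ℕ) → Z} (hf : Continuous f) {c : ℝ≥0∞} (hc : c < φ (range f)) :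
    ∃ K ⊆ range f, IsCompact K ∧ c ≤ φ K := by
  obtain ⟨k, hk⟩ := exists_forall_truncated_box (P := fun S => c < φ (f '' S))
    (fun A hA hcA => by
      by_contra! hle
      rw [image_iUnion] at hcA
      exact hcA.not_ge (hbelow c _ (fun i j hij => image_mono (hA hij)) hle))
    (by rwa [image_univ])
  refine ⟨f '' Iic k, image_subset_range _ _, (isCompact_Iic_nat_pi k).image hf, ?_⟩
  by_contra! hlt
  obtain ⟨W, hW, hKW, hWc⟩ := houter _ _ hlt
  obtain ⟨j, hj⟩ := exists_truncated_box_subset (hW.preimage hf) (image_subset_iff.1 hKW)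
  exact ((hk j).trans_le (hmono (image_subset_iff.2 hj))).not_gt hWc

end Capacity

section CompactSubset

variable {Z : Type*} [EMetricSpace Z] [MeasurableSpace Z] [BorelSpace Z] {s : ℝ}
  {f : (ℕ → ℕ) → Z}

lemma exists_isCompact_hausdorffContent_pos_of_finite (hs : 0 < s) (hf : Continuous f)
    {S : Set Z} (hSf : S ⊆ range f) (hS0 : μH[s] S ≠ 0) (hS : μH[s] S < ⊤) :
    ∃ K ⊆ range f, IsCompact K ∧ 0 < hausdorffContent s K := by
  let m : Measure Z := (μH[s] : Measure Z).restrict (toMeasurable μH[s] S)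
  have : IsFiniteMeasure m := ⟨by simpa [m] using hS⟩
  have hSm : μH[s] S ≤ m S := by
    nth_rw 1 [← inter_eq_left.2 (subset_toMeasurable μH[s] S)]
    exact Measure.le_restrict_apply _ _
  obtain ⟨c, hc0, hc⟩ := exists_between <|
    (pos_iff_ne_zero.2 hS0).trans_le (hSm.trans (measure_mono hSf))
  obtain ⟨K, hKf, hK, hcK⟩ := exists_isCompact_le_of_lt_range (φ := m)
    (fun _ _ => measure_mono) (fun c A hA hAc => hA.measure_iUnion.trans_le (iSup_le hAc))
    (fun K c hKc => by
      obtain ⟨W, hKW, hW, hWc⟩ := K.exists_isOpen_lt_of_lt c hKc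
      exact ⟨W, hW, hKW, hWc⟩) hf hc
  refine ⟨K, hKf, hK, pos_iff_ne_zero.2 fun hK0 => (hc0.trans_le hcK).ne' ?_⟩
  exact nonpos_iff_eq_zero.1 <| (Measure.restrict_apply_le _ _).trans_eq
    (hausdorffMeasure_eq_zero_of_hausdorffContent_eq_zero hs hK0)

lemma exists_isCompact_hausdorffContent_pos_of_surjective (hs : 0 < s) (hf : Continuous f)
    (hsurj : Function.Surjective f) (hZ : 0 < μH[s] (univ : Set Z)) :
    ∃ K : Set Z, IsCompact K ∧ 0 < hausdorffContent s K := by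
  by_cases hfin : ∃ S : Set Z, μH[s] S < ⊤ ∧ μH[s] S ≠ 0
  · obtain ⟨S, hS, hS0⟩ := hfin
    obtain ⟨K, -, hK⟩ := exists_isCompact_hausdorffContent_pos_of_finite hs hf
      (hsurj.range_eq ▸ subset_univ S) hS0 hS
    exact ⟨K, hK⟩
  push Not at hfin
  have : TopologicalSpace.SeparableSpace Z := hsurj.denseRange.separableSpace hf
  have : SecondCountableTopology Z := UniformSpace.secondCountable_of_separable Z
  have hpos : 0 < hausdorffContent s (range f) := by
    rw [hsurj.range_eq, pos_iff_ne_zero]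
    exact fun h => hZ.ne' (hausdorffMeasure_eq_zero_of_hausdorffContent_eq_zero hs h)
  obtain ⟨c, hc0, hc⟩ := exists_between hpos
  obtain ⟨K, -, hK, hcK⟩ := exists_isCompact_le_of_lt_range (φ := hausdorffContent s)
    (fun _ _ => measure_mono)
    (fun c A hA hAc => hausdorffContent_iUnion_le_of_monotone hs hfin hA hAc)
    (fun K c => exists_isOpen_hausdorffContent_lt hs) hf hc
  exact ⟨K, hK, hc0.trans_le hcK⟩

lemma exists_isCompact_hausdorffContent_pos {X : Set Z} (hX : AnalyticSet X) (hs : 0 < s)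
    (hpos : 0 < μH[s] X) : ∃ K ⊆ X, IsCompact K ∧ 0 < hausdorffContent s K := by
  rw [AnalyticSet] at hX
  obtain rfl | ⟨f, hf, rfl⟩ := hX
  · simp at hpos
  obtain ⟨K, hK, hKpos⟩ := exists_isCompact_hausdorffContent_pos_of_surjective hs
    (hf.subtype_mk mem_range_self) rangeFactorization_surjective <| by
      rwa [← isometry_subtype_coe.hausdorffMeasure_image (Or.inl hs.le), image_univ,
        Subtype.range_coe]
  exact ⟨Subtype.val '' K, Subtype.coe_image_subset _ K, hK.image continuous_subtype_val,
    by rwa [hausdorffContent_image_of_isometry isometry_subtype_coe hs]⟩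

end CompactSubset

section WeightedCover

lemma le_of_forall_succ_mul_le_add {a b S : ℝ≥0∞} (hS : S ≠ ⊤)
    (h : ∀ m : ℕ, (m + 1) * a ≤ (m + 1) * b + S) : a ≤ b := by
  have hlim : Tendsto (fun m : ℕ => b + S / (m + 1 : ℕ)) atTop (𝓝 b) := by
    simpa using tendsto_const_nhds.add (ENNReal.Tendsto.const_div
      (ENNReal.tendsto_nat_nhds_top.comp (tendsto_add_atTop_nat 1)) (Or.inr hS))
  refine ge_of_tendsto' hlim fun m => ?_
  have hm0 : ((m + 1 : ℕ) : ℝ≥0∞) ≠ 0 := by positivity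
  rw [← ENNReal.mul_le_mul_iff_right hm0 (ENNReal.natCast_ne_top _), mul_add,
    ENNReal.mul_div_cancel hm0 (ENNReal.natCast_ne_top _)]
  exact_mod_cast h m

variable {Z ι : Type*} [PseudoEMetricSpace Z] [Fintype ι] {s : ℝ} {B : ι → Set Z} {D : Set Z}

lemma succ_mul_hausdorffContent_le_sum (hs : 0 ≤ s) (hB : ∀ i, ediam (B i) ≠ ⊤) (m : ℕ)
    (n : ι → ℕ) (hn : ∀ x ∈ D, m + 1 ≤ ∑ i, n i * (B i).indicator (1 : Z → ℝ≥0∞) x) :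
    (m + 1) * hausdorffContent s D ≤ 5 ^ s * ∑ i, n i * ediam (B i) ^ s := by
  obtain ⟨u, hDu, hu⟩ := exists_subfamily_enlargement_cover (R := ∑ i, ediam (B i))
    (ENNReal.sum_ne_top.2 fun i _ => hB i)
    (fun i => Finset.single_le_sum_of_canonicallyOrdered (f := fun i => ediam (B i))
      (Finset.mem_univ i))
    (fun i => ediam (B i) ^ s) m n (by simpa only [tsum_fintype] using hn)
  have hcontent : hausdorffContent s D ≤ 5 ^ s * ∑' i, u.indicator (fun i => ediam (B i) ^ s) i :=
    calc hausdorffContent s D ≤ ∑' i : u, ediam (enlargement (B i)) ^ s :=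
          hausdorffContent_le_tsum (by rwa [← biUnion_eq_iUnion u fun i _ => enlargement (B i)])
      _ ≤ ∑' i : u, 5 ^ s * ediam (B i) ^ s :=
          ENNReal.tsum_le_tsum fun i => ediam_enlargement_rpow_le hs (B i)
      _ = 5 ^ s * ∑' i, u.indicator (fun i => ediam (B i) ^ s) i := by
          rw [ENNReal.tsum_mul_left, tsum_subtype u fun i => ediam (B i) ^ s]
  calc (m + 1) * hausdorffContent s D
      ≤ (m + 1) * (5 ^ s * ∑' i, u.indicator (fun i => ediam (B i) ^ s) i) := by gcongr
    _ = 5 ^ s * ((m + 1) * ∑' i, u.indicator (fun i => ediam (B i) ^ s) i) := mul_left_comm _ _ _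
    _ ≤ 5 ^ s * ∑ i, n i * ediam (B i) ^ s := mul_le_mul_right (hu.trans_eq (tsum_fintype _)) _

-- Rounding `(m + 1) * c i` up to an integer costs one extra copy of each set, which is negligible
-- against `m + 1` as `m → ∞`.
lemma hausdorffContent_le_mul_sum (hs : 0 ≤ s) (hB : ∀ i, ediam (B i) ≠ ⊤) (c : ι → ℝ≥0)
    (hc : ∀ x ∈ D, 1 ≤ ∑ i, c i * (B i).indicator (1 : Z → ℝ≥0∞) x) :
    hausdorffContent s D ≤ 5 ^ s * ∑ i, c i * ediam (B i) ^ s := by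
  have h5 : (5 : ℝ≥0∞) ^ s ≠ ⊤ := by finiteness
  have hS : ∑ i, ediam (B i) ^ s ≠ ⊤ :=
    ENNReal.sum_ne_top.2 fun i _ => ENNReal.rpow_ne_top_of_nonneg hs (hB i)
  refine le_of_forall_succ_mul_le_add (ENNReal.mul_ne_top h5 hS) fun m => ?_
  obtain ⟨n, hle, hn_le⟩ : ∃ n : ι → ℕ, (∀ i, ((m + 1) * c i : ℝ≥0∞) ≤ n i) ∧
      ∀ i, (n i : ℝ≥0∞) ≤ (m + 1) * c i + 1 :=
    ⟨fun i => ⌈(m + 1) * c i⌉₊, fun i => mod_cast Nat.le_ceil ((m + 1) * c i),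
      fun i => mod_cast (Nat.ceil_lt_add_one (bot_le : 0 ≤ (m + 1) * c i)).le⟩
  calc (m + 1) * hausdorffContent s D
      ≤ 5 ^ s * ∑ i, n i * ediam (B i) ^ s := by
        refine succ_mul_hausdorffContent_le_sum hs hB m n fun x hx => ?_
        calc (m + 1 : ℝ≥0∞) ≤ (m + 1) * ∑ i, c i * (B i).indicator (1 : Z → ℝ≥0∞) x :=
              le_mul_of_one_le_right' (hc x hx)
          _ = ∑ i, (m + 1) * c i * (B i).indicator (1 : Z → ℝ≥0∞) x := by
              simp only [Finset.mul_sum, mul_assoc]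
          _ ≤ ∑ i, n i * (B i).indicator (1 : Z → ℝ≥0∞) x := by gcongr with i; exact hle i
    _ ≤ 5 ^ s * ∑ i, ((m + 1) * c i + 1) * ediam (B i) ^ s := by gcongr with i; exact hn_le i
    _ = (m + 1) * (5 ^ s * ∑ i, c i * ediam (B i) ^ s) + 5 ^ s * ∑ i, ediam (B i) ^ s := by
        simp only [add_mul, one_mul, Finset.sum_add_distrib, mul_add, mul_assoc, ← Finset.mul_sum]
        ring

end WeightedCover

section WeightedContent

variable {Y : Type*}

/-- The function `∑ B, w B * 1_B` of a finitely supported system `w` of weights on the sets of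
`Y`. -/
noncomputable def coverSum : (Set Y →₀ ℝ≥0) →ₗ[ℝ≥0] (Y → ℝ) :=
  Finsupp.linearCombination ℝ≥0 fun B => B.indicator 1

lemma coverSum_single_one (B : Set Y) : coverSum (Finsupp.single B 1) = B.indicator 1 := by
  simp [coverSum]

lemma ofReal_coverSum_apply (w : Set Y →₀ ℝ≥0) (y : Y) :
    ENNReal.ofReal (coverSum w y) =
      ∑ B ∈ w.support, w B * B.indicator (1 : Y → ℝ≥0∞) y := by
  have hterm (B : Set Y) : ENNReal.ofReal ((w B • B.indicator (1 : Y → ℝ)) y) =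
      w B * B.indicator 1 y := by
    by_cases hy : y ∈ B <;> simp [hy, NNReal.smul_def]
  have hnonneg (B : Set Y) : 0 ≤ (w B • B.indicator (1 : Y → ℝ)) y :=
    smul_nonneg (zero_le (a := w B)) (indicator_nonneg (fun _ _ => zero_le_one) y)
  rw [coverSum, Finsupp.linearCombination_apply, Finsupp.sum, Finset.sum_apply,
    ENNReal.ofReal_sum_of_nonneg fun B _ => hnonneg B]
  exact Finset.sum_congr rfl fun B _ => hterm B

variable [MetricSpace Y] {s : ℝ}

/-- The total cost `∑ B, w B * diam B ^ s` of a finitely supported system `w` of weights. -/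
noncomputable def coverCost (s : ℝ) : (Set Y →₀ ℝ≥0) →ₗ[ℝ≥0] ℝ :=
  Finsupp.linearCombination ℝ≥0 fun B => diam B ^ s

lemma coverCost_nonneg (w : Set Y →₀ ℝ≥0) : 0 ≤ coverCost s w := by
  rw [coverCost, Finsupp.linearCombination_apply]
  exact Finset.sum_nonneg fun B _ => smul_nonneg zero_le (Real.rpow_nonneg diam_nonneg s)

lemma coverCost_single_one (B : Set Y) : coverCost s (Finsupp.single B 1) = diam B ^ s := by
  simp [coverCost]

/-- The infimum of the costs of the weighted covers whose sum dominates `f`, as a functional on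
continuous functions; at `f = 1` it is Federer's weighted Hausdorff content. -/
noncomputable def weightedContent (s : ℝ) (f : C(Y, ℝ)) : ℝ :=
  ⨅ w : {w : Set Y →₀ ℝ≥0 // ⇑f ≤ coverSum w}, coverCost s w.1

lemma weightedContent_le {f : C(Y, ℝ)} {w : Set Y →₀ ℝ≥0} (hw : ⇑f ≤ coverSum w) :
    weightedContent s f ≤ coverCost s w :=
  ciInf_le (f := fun w : {w : Set Y →₀ ℝ≥0 // ⇑f ≤ coverSum w} => coverCost s w.1)
    ⟨0, forall_mem_range.2 fun w => coverCost_nonneg w.1⟩ ⟨w, hw⟩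

lemma weightedContent_nonpos {f : C(Y, ℝ)} (hf : f ≤ 0) : weightedContent s f ≤ 0 := by
  simpa using weightedContent_le (s := s) (f := f) (w := 0) (by rwa [map_zero])

variable [CompactSpace Y]

lemma le_weightedContent {f : C(Y, ℝ)} {a : ℝ} (h : ∀ w, ⇑f ≤ coverSum w → a ≤ coverCost s w) :
    a ≤ weightedContent s f := by
  have : Nonempty {w : Set Y →₀ ℝ≥0 // ⇑f ≤ coverSum w} := by
    refine ⟨Finsupp.single univ ‖f‖₊, fun y => ?_⟩
    simpa [coverSum, NNReal.smul_def] using (le_abs_self _).trans (f.norm_coe_le_norm y)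
  exact le_ciInf fun w => h w.1 w.2

lemma weightedContent_add_le (f g : C(Y, ℝ)) :
    weightedContent s (f + g) ≤ weightedContent s f + weightedContent s g := by
  rw [← sub_le_iff_le_add]
  refine le_weightedContent fun v hv => sub_le_comm.1 <| le_weightedContent fun w hw => ?_
  rw [sub_le_iff_le_add', ← map_add]
  exact weightedContent_le (by rw [map_add]; exact add_le_add hv hw)

lemma weightedContent_smul_le {c : ℝ} (hc : 0 < c) (f : C(Y, ℝ)) :
    weightedContent s (c • f) ≤ c * weightedContent s f := by
  rw [← div_le_iff₀' hc]
  refine le_weightedContent fun w hw => (div_le_iff₀' hc).2 ?_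
  lift c to ℝ≥0 using hc.le
  calc weightedContent s ((c : ℝ) • f) ≤ coverCost s (c • w) := weightedContent_le <| by
        rw [map_smul coverSum c w]
        exact smul_le_smul_of_nonneg_left hw c.coe_nonneg
    _ = c * coverCost s w := map_smul (coverCost s) c w

lemma weightedContent_smul {c : ℝ} (hc : 0 < c) (f : C(Y, ℝ)) :
    weightedContent s (c • f) = c * weightedContent s f := by
  refine (weightedContent_smul_le hc f).antisymm ?_
  have h := weightedContent_smul_le (s := s) (inv_pos.2 hc) (c • f)
  rwa [inv_smul_smul₀ hc.ne', ← div_eq_inv_mul, le_div_iff₀' hc] at h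

lemma ofReal_diam (B : Set Y) : ENNReal.ofReal (diam B) = ediam B :=
  ENNReal.ofReal_toReal isBounded_of_compactSpace.ediam_ne_top

lemma ofReal_coverCost (hs : 0 ≤ s) (w : Set Y →₀ ℝ≥0) :
    ENNReal.ofReal (coverCost s w) = ∑ B ∈ w.support, w B * ediam B ^ s := by
  rw [coverCost, Finsupp.linearCombination_apply, Finsupp.sum, ENNReal.ofReal_sum_of_nonneg
    fun B _ => smul_nonneg zero_le (Real.rpow_nonneg diam_nonneg s)]
  refine Finset.sum_congr rfl fun B _ => ?_
  rw [NNReal.smul_def, smul_eq_mul, ENNReal.ofReal_mul (w B).coe_nonneg,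
    ENNReal.ofReal_coe_nnreal, ← ENNReal.ofReal_rpow_of_nonneg diam_nonneg hs, ofReal_diam]

lemma hausdorffContent_univ_le_coverCost (hs : 0 ≤ s) {w : Set Y →₀ ℝ≥0} (hw : 1 ≤ coverSum w) :
    hausdorffContent s (univ : Set Y) ≤ 5 ^ s * ENNReal.ofReal (coverCost s w) := by
  rw [ofReal_coverCost hs, ← Finset.sum_coe_sort]
  refine hausdorffContent_le_mul_sum hs (fun B => isBounded_of_compactSpace.ediam_ne_top)
    (fun B : w.support => w B) fun y _ => ?_
  rw [Finset.sum_coe_sort w.support fun B => w B * B.indicator (1 : Y → ℝ≥0∞) y,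
    ← ofReal_coverSum_apply]
  exact ENNReal.one_le_ofReal.2 (hw y)

lemma weightedContent_one_pos (hs : 0 ≤ s) (hY : hausdorffContent s (univ : Set Y) ≠ 0) :
    0 < weightedContent s (1 : C(Y, ℝ)) := by
  have hfin : hausdorffContent s (univ : Set Y) ≠ ⊤ :=
    ne_top_of_le_ne_top (ENNReal.rpow_ne_top_of_nonneg hs isBounded_of_compactSpace.ediam_ne_top)
      (hausdorffContent_le_ediam_rpow s univ)
  have h5 : (5 : ℝ≥0∞) ^ s ≠ 0 := by simp
  refine (ENNReal.toReal_pos (ENNReal.div_pos hY (by finiteness)).ne'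
    (ENNReal.div_ne_top hfin h5)).trans_le
    (le_weightedContent fun w hw => ENNReal.toReal_le_of_le_ofReal (coverCost_nonneg w) ?_)
  exact ENNReal.div_le_of_le_mul' (hausdorffContent_univ_le_coverCost hs hw)

end WeightedContent

section Duality

lemma exists_linearMap_apply_eq_and_le {E : Type*} [AddCommGroup E] [Module ℝ E] {N : E → ℝ}
    (hsmul : ∀ c : ℝ, 0 < c → ∀ x, N (c • x) = c * N x) (hadd : ∀ x y, N (x + y) ≤ N x + N y)
    (x₀ : E) : ∃ L : E →ₗ[ℝ] ℝ, L x₀ = N x₀ ∧ ∀ x, L x ≤ N x := by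
  have hzero : N 0 = 0 := by
    have := hsmul 2 two_pos 0
    rw [smul_zero] at this
    linarith
  have hle (c : ℝ) : c * N x₀ ≤ N (c • x₀) := by
    obtain hc | rfl | hc := lt_trichotomy c 0
    · have h := hadd (c • x₀) (-c • x₀)
      rw [hsmul (-c) (neg_pos.2 hc), neg_smul, add_neg_cancel, hzero] at h
      linarith
    · simp [hzero]
    · exact (hsmul c hc x₀).ge
  have hx₀ (c : ℝ) (hc : c • x₀ = 0) : c • N x₀ = 0 := by
    obtain rfl | rfl := smul_eq_zero.1 hc
    · exact zero_smul ℝ _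
    · rw [hzero, smul_zero]
  obtain ⟨L, hL, hLN⟩ := exists_extension_of_le_sublinear
    (LinearPMap.mkSpanSingleton' x₀ (N x₀) hx₀) N hsmul hadd <| by
      rintro ⟨_, hx⟩
      obtain ⟨c, rfl⟩ := Submodule.mem_span_singleton.1 hx
      rw [LinearPMap.mkSpanSingleton'_apply]
      exact hle c
  refine ⟨L, ?_, hLN⟩
  exact (hL ⟨x₀, Submodule.mem_span_singleton_self x₀⟩).trans
    (LinearPMap.mkSpanSingleton'_apply_self x₀ (N x₀) hx₀ _)

lemma exists_isFiniteMeasure_integral_eq {Y : Type*} [TopologicalSpace Y] [T2Space Y]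
    [CompactSpace Y] [MeasurableSpace Y] [BorelSpace Y] (L : C(Y, ℝ) →ₗ[ℝ] ℝ)
    (hL : ∀ f, 0 ≤ f → 0 ≤ L f) :
    ∃ ν : Measure Y, IsFiniteMeasure ν ∧ ∀ f : C(Y, ℝ), ∫ y, f y ∂ν = L f := by
  let L' : CompactlySupportedContinuousMap Y ℝ →ₗ[ℝ] ℝ :=
    { toFun g := L g.toContinuousMap
      map_add' g h := L.map_add g.toContinuousMap h.toContinuousMap
      map_smul' c g := L.map_smul c g.toContinuousMap }
  let Λ := PositiveLinearMap.mk₀ L' fun g hg => hL g.toContinuousMap hg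
  exact ⟨RealRMK.rieszMeasure Λ, inferInstance, fun f =>
    RealRMK.integral_rieszMeasure Λ (CompactlySupportedContinuousMap.continuousMapEquiv f)⟩

end Duality

section CompactSpace

variable {Y : Type*} [MetricSpace Y] [CompactSpace Y] [MeasurableSpace Y] [BorelSpace Y] {s : ℝ}

lemma measure_le_ediam_rpow_of_integral_le (hs : 0 < s) {ν : Measure Y} [IsFiniteMeasure ν]
    (hν : ∀ f : C(Y, ℝ), ∫ y, f y ∂ν ≤ weightedContent s f) (E : Set Y) :
    ν E ≤ ediam E ^ s := by
  refine ENNReal.le_of_forall_pos_le_add fun ε hε _ => ?_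
  obtain ⟨η, hη, hηE⟩ := exists_ediam_thickening_rpow_le hs E (ENNReal.coe_pos.2 hε).ne'
  let f : C(Y, ℝ) := ⟨fun y => thickenedIndicator hη E y, by fun_prop⟩
  have hf : ⇑f ≤ coverSum (Finsupp.single (thickening η E) 1) := fun y => by
    rw [coverSum_single_one]
    by_cases hy : y ∈ thickening η E
    · rw [indicator_of_mem hy]
      exact thickenedIndicator_le_one hη E y
    · rw [indicator_of_notMem hy]
      exact (congrArg NNReal.toReal (thickenedIndicator_zero hη E hy)).le
  calc ν E ≤ ∫⁻ y, thickenedIndicator hη E y ∂ν :=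
        meas_le_lintegral₀ (by fun_prop) fun y hy =>
          ENNReal.coe_le_coe.2 (thickenedIndicator_one hη E hy).ge
    _ = ENNReal.ofReal (∫ y, f y ∂ν) :=
        lintegral_coe_eq_integral _ (BoundedContinuousFunction.integrable_of_nnreal ν _)
    _ ≤ ENNReal.ofReal (diam (thickening η E) ^ s) := by
        gcongr
        exact (hν f).trans ((weightedContent_le hf).trans_eq (coverCost_single_one _))
    _ = ediam (thickening η E) ^ s := by
        rw [← ENNReal.ofReal_rpow_of_nonneg diam_nonneg hs.le, ofReal_diam]
    _ ≤ ediam E ^ s + ε := hηE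

lemma exists_isFiniteMeasure_le_ediam_rpow (hs : 0 < s)
    (hY : hausdorffContent s (univ : Set Y) ≠ 0) :
    ∃ ν : Measure Y, IsFiniteMeasure ν ∧ ν ≠ 0 ∧ ∀ E, ν E ≤ ediam E ^ s := by
  obtain ⟨L, hL1, hL⟩ := exists_linearMap_apply_eq_and_le (N := weightedContent s)
    (fun c hc f => weightedContent_smul hc f) weightedContent_add_le (1 : C(Y, ℝ))
  have hLpos (f : C(Y, ℝ)) (hf : 0 ≤ f) : 0 ≤ L f := by
    simpa using (hL (-f)).trans (weightedContent_nonpos (neg_nonpos.2 hf))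
  obtain ⟨ν, hfin, hν⟩ := exists_isFiniteMeasure_integral_eq L hLpos
  refine ⟨ν, hfin, ?_, measure_le_ediam_rpow_of_integral_le hs fun f => (hν f).trans_le (hL f)⟩
  rintro rfl
  have := weightedContent_one_pos hs.le hY
  simp [← hL1, ← hν] at this

end CompactSpace

lemma exists_measure_le_ediam_rpow {Z : Type*} [MetricSpace Z] [MeasurableSpace Z] [BorelSpace Z]
    {X : Set Z} {s : ℝ} (hX : AnalyticSet X) (hs : 0 < s) (hpos : 0 < μH[s] X) :
    ∃ μ : Measure Z, μ Xᶜ = 0 ∧ 0 < μ X ∧ μ X < ⊤ ∧ ∀ E, μ E ≤ ediam E ^ s := by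
  obtain ⟨K, hKX, hK, hKpos⟩ := exists_isCompact_hausdorffContent_pos hX hs hpos
  have : CompactSpace K := isCompact_iff_compactSpace.1 hK
  obtain ⟨ν, _, hν0, hν⟩ := exists_isFiniteMeasure_le_ediam_rpow (Y := K) hs <| by
    rw [← hausdorffContent_image_of_isometry isometry_subtype_coe hs, image_univ,
      Subtype.range_coe]
    exact hKpos.ne'
  have hmap := (MeasurableEmbedding.subtype_coe hK.measurableSet).map_apply ν
  have hXuniv : (Subtype.val ⁻¹' X : Set K) = univ := preimage_eq_univ_iff.2 (by simpa using hKX)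
  refine ⟨ν.map Subtype.val, ?_, ?_, ?_, fun E => ?_⟩
  · rw [hmap, preimage_compl, hXuniv, compl_univ, measure_empty]
  · rw [hmap, hXuniv]
    exact Measure.measure_univ_pos.2 hν0
  · rw [hmap, hXuniv]
    exact measure_lt_top ν univ
  · rw [hmap]
    refine (hν _).trans (ENNReal.rpow_le_rpow ?_ hs.le)
    rw [← isometry_subtype_coe.ediam_image]
    exact ediam_mono (image_preimage_subset _ _)

end Frostman

theorem frostman_of_hausdorffMeasure_pos_general {Z : Type*}
    [MetricSpace Z] [MeasurableSpace Z] [BorelSpace Z]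
    (X : Set Z) (hX : MeasureTheory.AnalyticSet X) (s : ℝ) (hs : 0 < s)
    (hH : 0 < μH[s] X) :
    ∃ μ : Measure Z, μ Xᶜ = 0 ∧ 0 < μ X ∧ μ X < ⊤ ∧
      ∃ c : ℝ, 0 < c ∧ ∀ x ∈ X, ∀ r : ℝ, 0 < r → μ (ball x r) ≤ ENNReal.ofReal (c * r ^ s) := by
  obtain ⟨μ, hμX, hμpos, hμtop, hμ⟩ := Frostman.exists_measure_le_ediam_rpow hX hs hH
  refine ⟨μ, hμX, hμpos, hμtop, 2 ^ s, by positivity, fun x _ r hr => ?_⟩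
  calc μ (ball x r) ≤ ediam (ball x r) ^ s := hμ _
    _ ≤ ENNReal.ofReal (2 * r) ^ s := by
      rw [← eball_ofReal, ENNReal.ofReal_mul zero_le_two, ENNReal.ofReal_ofNat]
      exact ENNReal.rpow_le_rpow ediam_eball_le hs.le
    _ = ENNReal.ofReal (2 ^ s * r ^ s) := by
      rw [ENNReal.ofReal_rpow_of_pos (by positivity), Real.mul_rpow zero_le_two hr.le]

theorem frostman_of_hausdorffMeasure_pos {Z : Type*}
    [MetricSpace Z] [CompleteSpace Z] [TopologicalSpace.SeparableSpace Z]
    [MeasurableSpace Z] [BorelSpace Z]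
    (X : Set Z) (hX : MeasureTheory.AnalyticSet X) (s : ℝ) (hs : 0 < s)
    (hH : 0 < μH[s] X) :
    ∃ μ : Measure Z, μ Xᶜ = 0 ∧ 0 < μ X ∧ μ X < ⊤ ∧
      ∃ c : ℝ, 0 < c ∧ ∀ x ∈ X, ∀ r : ℝ, 0 < r → μ (ball x r) ≤ ENNReal.ofReal (c * r ^ s) :=
  frostman_of_hausdorffMeasure_pos_general X hX s hs hH
end

section
/- Let X be an analytic subset of a complete separable metric space. Then the Hausdorff dimension of X equals sup{s > 0 : there exists a Borel measure μ on X with 0 < μ(X) < ∞ and I_s(μ) < ∞} (with the convention that the supremum of the empty set is 0). -/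
open scoped ENNReal NNReal
open MeasureTheory Metric Set

/-- The `s`-energy of a measure. -/
noncomputable def energy {X : Type*} [PseudoMetricSpace X] [MeasurableSpace X] (s : ℝ)
    (μ : Measure X) : ℝ≥0∞ :=
  ∫⁻ x₁, ∫⁻ x₂, edist x₁ x₂ ^ (-s) ∂μ ∂μ

/-!
Positivity of Hausdorff measure and finiteness of energy are compared through the dyadic Hausdorff
content, which vanishes exactly where the Hausdorff measure of the same order does.

If `μ` has finite `s`-energy, its potential of order `s` is bounded on a set of positive measure,
where the mass of a set `S` is at most a multiple of `diam S ^ s`; hence `μH[s]` is positive there.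

Conversely, let `s` be below the dimension of an analytic set `X`. The content of increasing sets
`Aₙ` passes to their union up to an arbitrarily small loss in the exponent: a limit of almost
optimal covers of the `Aₙ` along an ultrafilter covers all of the union but a set of content zero.
Applied to the images of increasing boxes in the Baire space this gives a compact subset of `X` of
positive content. There Frostman's lemma follows by duality: a probability measure with the required
ball growth exists unless some cheap finite combination of bumps on balls is at least `1`
everywhere, and such a fractional cover can be rounded to a genuine one, again at the price of an
arbitrarily small loss in the exponent. Summing the ball growth over dyadic scales bounds the
energy.
-/

open Filter Topology

/-- The scale `2⁻ᵏ` at which the diameters of the pieces of a cover are measured. -/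
noncomputable def dyadicScale (k : ℕ) : ℝ≥0∞ := 2⁻¹ ^ k

lemma dyadicScale_zero : dyadicScale 0 = 1 := by simp [dyadicScale]

lemma dyadicScale_ne_zero (k : ℕ) : dyadicScale k ≠ 0 := by simp [dyadicScale]

lemma dyadicScale_ne_top (k : ℕ) : dyadicScale k ≠ ⊤ := by simp [dyadicScale]

lemma antitone_dyadicScale : Antitone dyadicScale :=
  fun _ _ h => pow_le_pow_of_le_one (by simp) (by simp) h

lemma dyadicScale_le_one (k : ℕ) : dyadicScale k ≤ 1 :=
  dyadicScale_zero ▸ antitone_dyadicScale k.zero_le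

lemma two_mul_dyadicScale_succ (k : ℕ) : 2 * dyadicScale (k + 1) = dyadicScale k := by
  rw [dyadicScale, dyadicScale, pow_succ', ← mul_assoc,
    ENNReal.mul_inv_cancel two_ne_zero ENNReal.ofNat_ne_top, one_mul]

lemma dyadicScale_succ_lt (k : ℕ) : dyadicScale (k + 1) < dyadicScale k := by
  rw [← two_mul_dyadicScale_succ k, two_mul]
  exact ENNReal.lt_add_right (dyadicScale_ne_top _) (dyadicScale_ne_zero _)

lemma dyadicScale_add (k l : ℕ) : dyadicScale (k + l) = dyadicScale k * dyadicScale l :=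
  pow_add _ k l

lemma dyadicScale_rpow_ne_zero (k : ℕ) (s : ℝ) : dyadicScale k ^ s ≠ 0 := by
  simp [ENNReal.rpow_eq_zero_iff, dyadicScale_ne_zero, dyadicScale_ne_top]

lemma dyadicScale_rpow_ne_top (k : ℕ) (s : ℝ) : dyadicScale k ^ s ≠ ⊤ := by
  simp [ENNReal.rpow_eq_top_iff, dyadicScale_ne_zero, dyadicScale_ne_top]

lemma dyadicScale_rpow_add (k : ℕ) (s t : ℝ) :
    dyadicScale k ^ (s + t) = dyadicScale k ^ s * dyadicScale k ^ t :=
  ENNReal.rpow_add _ _ (dyadicScale_ne_zero k) (dyadicScale_ne_top k)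

lemma dyadicScale_rpow_le_of_exponent_ge (k : ℕ) {s t : ℝ} (h : s ≤ t) :
    dyadicScale k ^ t ≤ dyadicScale k ^ s :=
  ENNReal.rpow_le_rpow_of_exponent_ge (dyadicScale_le_one k) h

lemma dyadicScale_rpow_eq_pow (k : ℕ) (s : ℝ) : dyadicScale k ^ s = ((2⁻¹ : ℝ≥0∞) ^ s) ^ k := by
  rw [dyadicScale, ← ENNReal.rpow_natCast, ← ENNReal.rpow_mul, mul_comm, ENNReal.rpow_mul,
    ENNReal.rpow_natCast]

lemma tendsto_dyadicScale_rpow {s : ℝ} (hs : 0 < s) :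
    Tendsto (fun k => dyadicScale k ^ s) atTop (𝓝 0) := by
  simp_rw [dyadicScale_rpow_eq_pow]
  exact ENNReal.tendsto_pow_atTop_nhds_zero_of_lt_one (ENNReal.rpow_lt_one (by simp) hs)

lemma tsum_dyadicScale_rpow_ne_top {s : ℝ} (hs : 0 < s) : ∑' k, dyadicScale k ^ s ≠ ⊤ := by
  simp_rw [dyadicScale_rpow_eq_pow, ENNReal.tsum_geometric]
  exact ENNReal.inv_ne_top.2 (tsub_pos_of_lt (ENNReal.rpow_lt_one (by simp) hs)).ne'

/-- The cost of a cover `F` whose member `F p` has diameter at most `2 ^ (-κ p)`. Empty members are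
free, so that covers of varying length can share one index type. -/
noncomputable def coverCost {Z ι : Type*} (s : ℝ) (κ : ι → ℕ) (F : ι → Set Z) : ℝ≥0∞ :=
  ∑' p, ⨆ _ : (F p).Nonempty, dyadicScale (κ p) ^ s

section Content

variable {Z : Type*} [PseudoEMetricSpace Z] {s t : ℝ}

/-- The cheapest value `2⁻ᵏˢ` of a scale bounding the diameter of a set, and `⊤` if no scale
bounds it. -/
noncomputable def dyadicCost (s : ℝ) (A : Set Z) : ℝ≥0∞ :=
  ⨅ (k : ℕ) (_ : ediam A ≤ dyadicScale k), dyadicScale k ^ s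

/-- The `s`-dimensional dyadic Hausdorff content: the infimum of `∑ 2 ^ (-kᵢ s)` over all countable
covers by sets of diameter at most `2 ^ (-kᵢ)`. Unlike the Hausdorff measure, it carries no
smallness condition on the `kᵢ`. -/
noncomputable def dyadicContent (s : ℝ) : OuterMeasure Z :=
  OuterMeasure.boundedBy (dyadicCost s)

lemma dyadicCost_le {A : Set Z} {k : ℕ} (h : ediam A ≤ dyadicScale k) :
    dyadicCost s A ≤ dyadicScale k ^ s := iInf₂_le k h

lemma dyadicCost_mono : Monotone (dyadicCost s : Set Z → ℝ≥0∞) :=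
  fun _ _ hAB => le_iInf₂ fun _ hk => dyadicCost_le ((ediam_mono hAB).trans hk)

lemma dyadicContent_le {A : Set Z} {k : ℕ} (h : ediam A ≤ dyadicScale k) :
    dyadicContent s A ≤ dyadicScale k ^ s :=
  (OuterMeasure.boundedBy_le A).trans (dyadicCost_le h)

lemma dyadicContent_le_of_exponent_ge (h : s ≤ t) (A : Set Z) :
    dyadicContent t A ≤ dyadicContent s A := by
  suffices (dyadicContent t : OuterMeasure Z) ≤ dyadicContent s from this A
  exact OuterMeasure.le_boundedBy.2 fun B => le_iInf₂ fun k hk =>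
    (dyadicContent_le hk).trans (dyadicScale_rpow_le_of_exponent_ge k h)

lemma dyadicContent_image_of_isometry {W : Type*} [PseudoEMetricSpace W] {f : Z → W}
    (hf : Isometry f) (A : Set Z) : dyadicContent s (f '' A) = dyadicContent s A := by
  have hcost : (fun B : Set Z => dyadicCost s (f '' B)) = dyadicCost s := by
    funext B
    simp only [dyadicCost, hf.ediam_image]
  rw [← OuterMeasure.comap_apply, dyadicContent,
    OuterMeasure.comap_boundedBy f (.inl fun _ _ h => dyadicCost_mono h), hcost, dyadicContent]

lemma exists_dyadicScale_le_dyadicCost_add (hs : 0 < s) (A : Set Z) {ε : ℝ≥0∞} (hε : ε ≠ 0)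
    (hA : (⨆ _ : A.Nonempty, dyadicCost s A) ≠ ⊤) :
    ∃ k, ediam A ≤ dyadicScale k ∧
      dyadicScale k ^ s ≤ (⨆ _ : A.Nonempty, dyadicCost s A) + ε := by
  rcases A.eq_empty_or_nonempty with rfl | hne
  · obtain ⟨k, hk⟩ :=
      ((tendsto_dyadicScale_rpow hs).eventually (gt_mem_nhds hε.bot_lt)).exists
    exact ⟨k, by simp, hk.le.trans le_add_self⟩
  · rw [iSup_pos hne] at hA ⊢
    obtain ⟨k, hlt⟩ := iInf_lt_iff.1 (ENNReal.lt_add_right hA hε)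
    obtain ⟨hk, hlt⟩ := iInf_lt_iff.1 hlt
    exact ⟨k, hk, hlt.le⟩

lemma exists_cover_of_dyadicContent_lt (hs : 0 < s) {A : Set Z} {c : ℝ≥0∞}
    (h : dyadicContent s A < c) :
    ∃ (F : ℕ → Set Z) (κ : ℕ → ℕ), A ⊆ ⋃ i, F i ∧ (∀ i, ediam (F i) ≤ dyadicScale (κ i)) ∧
      ∑' i, dyadicScale (κ i) ^ s < c := by
  rw [dyadicContent, OuterMeasure.boundedBy_apply] at h
  obtain ⟨F, h⟩ := iInf_lt_iff.1 h
  obtain ⟨hF, hlt⟩ := iInf_lt_iff.1 h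
  obtain ⟨ε, hε, hεc⟩ :=
    ENNReal.exists_pos_sum_of_countable' (tsub_pos_of_lt hlt).ne' ℕ
  choose κ hκ hcost using fun i => exists_dyadicScale_le_dyadicCost_add hs (F i) (hε i).ne'
    (ne_top_of_le_ne_top hlt.ne_top (ENNReal.le_tsum i))
  refine ⟨F, κ, hF, hκ, (ENNReal.tsum_le_tsum hcost).trans_lt ?_⟩
  rw [ENNReal.tsum_add, add_comm]
  exact lt_tsub_iff_right.1 hεc

end Content

section FractionalCover

variable {Z : Type*} [PseudoEMetricSpace Z] {ι : Type*} {s δ : ℝ} {D : Set Z} {F : ι → Set Z}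
  {c : ι → ℝ≥0∞} {v : ℝ≥0∞}

lemma dyadicContent_le_coveringNumber_mul {r : ℝ≥0} {k : ℕ} (hr : 2 * r ≤ dyadicScale k) :
    dyadicContent s D ≤ (coveringNumber r D : ℝ≥0∞) * dyadicScale k ^ s := by
  by_cases htop : coveringNumber r D = ⊤
  · simp [htop, ENNReal.top_mul (dyadicScale_rpow_ne_zero k s)]
  obtain ⟨N, -, hfin, hcover, hcard⟩ := exists_set_encard_eq_coveringNumber htop
  calc dyadicContent s D
      ≤ dyadicContent s (⋃ x ∈ N, closedEBall x r) :=
        measure_mono (isCover_iff_subset_iUnion_closedEBall.1 hcover)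
    _ ≤ ∑' x : N, dyadicContent s (closedEBall x.1 r) := measure_biUnion_le _ hfin.countable _
    _ ≤ ∑' _ : N, dyadicScale k ^ s :=
        ENNReal.tsum_le_tsum fun _ => dyadicContent_le (ediam_closedEBall_le.trans hr)
    _ = (coveringNumber r D : ℝ≥0∞) * dyadicScale k ^ s := by
        rw [ENNReal.tsum_set_const, hcard]

lemma packingNumber_mul_le_tsum {r : ℝ≥0} (hF : ∀ i, ediam (F i) ≤ r)
    (hD : ∀ x ∈ D, v ≤ ∑' i, (F i).indicator (fun _ => c i) x) :
    (packingNumber r D : ℝ≥0∞) * v ≤ ∑' i, c i := by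
  simp only [packingNumber, ENat.toENNReal_iSup, ENNReal.iSup_mul, iSup_le_iff]
  intro N hND hN
  have hone : ∀ i, ∑' x : N, (F i).indicator (fun _ => c i) x.1 ≤ c i := by
    intro i
    by_cases hex : ∃ x : N, x.1 ∈ F i
    · obtain ⟨x, hx⟩ := hex
      rw [tsum_eq_single x fun y hy => indicator_of_notMem (fun hyF => ?_) _]
      · exact indicator_le_self' (by simp) _
      · exact (hN y.2 x.2 (Subtype.coe_ne_coe.2 hy)).not_ge
          ((edist_le_ediam_of_mem hyF hx).trans (hF i))
    · push Not at hex
      simp [hex]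
  calc (N.encard : ℝ≥0∞) * v = ∑' _ : N, v := (ENNReal.tsum_set_const N v).symm
    _ ≤ ∑' x : N, ∑' i, (F i).indicator (fun _ => c i) x.1 :=
        ENNReal.tsum_le_tsum fun x => hD x.1 (hND x.2)
    _ = ∑' i, ∑' x : N, (F i).indicator (fun _ => c i) x.1 := ENNReal.tsum_comm
    _ ≤ ∑' i, c i := ENNReal.tsum_le_tsum hone

lemma dyadicContent_mul_le_of_le_tsum_indicator {k : ℕ}
    (hF : ∀ i, ediam (F i) ≤ dyadicScale (k + 1))
    (hD : ∀ x ∈ D, v ≤ ∑' i, (F i).indicator (fun _ => c i) x) :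
    dyadicContent s D * v ≤ (∑' i, c i) * dyadicScale k ^ s := by
  obtain ⟨r, hr⟩ : ∃ r : ℝ≥0, r = dyadicScale (k + 1) :=
    ENNReal.canLift.prf _ (dyadicScale_ne_top (k + 1))
  calc dyadicContent s D * v
      ≤ (packingNumber r D : ℝ≥0∞) * dyadicScale k ^ s * v := by
        gcongr
        refine (dyadicContent_le_coveringNumber_mul (r := r)
          (hr ▸ (two_mul_dyadicScale_succ k).le)).trans ?_
        gcongr
        exact coveringNumber_le_packingNumber r D
    _ = (packingNumber r D : ℝ≥0∞) * v * dyadicScale k ^ s := by ring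
    _ ≤ (∑' i, c i) * dyadicScale k ^ s := by
        gcongr
        exact packingNumber_mul_le_tsum (hr ▸ hF) hD

lemma exists_le_tsum_fiber {β : Type*} [Nonempty β] {κ : ι → β} {a : β → ℝ≥0∞} {g : ι → ℝ≥0∞}
    (ha : ∑' b, a b ≠ ⊤) (h : ∑' b, a b ≤ ∑' i, g i) : ∃ b, a b ≤ ∑' i : κ ⁻¹' {b}, g i := by
  by_contra! hlt
  have hlt' : ∑' b, ∑' i : κ ⁻¹' {b}, g i < ∑' b, a b :=
    ENNReal.tsum_lt_tsum (i := Classical.arbitrary β)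
      (ne_top_of_le_ne_top ha (ENNReal.tsum_le_tsum fun b => (hlt b).le))
      (fun b => (hlt b).le) (hlt _)
  exact hlt'.not_ge (h.trans_eq (ENNReal.tsum_fiberwise g κ).symm)

/-- Every point of `D` is heavily covered at some single scale `2 ^ (-k)`, where the fractional
cover can be replaced by a maximal separated set. -/
lemma dyadicContent_le_tsum_of_fractional_cover {κ : ι → ℕ} (hδ : 0 < δ)
    (hF : ∀ i, ediam (F i) ≤ dyadicScale (κ i + 1))
    (hD : ∀ x ∈ D, 1 ≤ ∑' i, (F i).indicator (fun _ => c i) x) :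
    dyadicContent (s + δ) D ≤
      (∑' k, dyadicScale k ^ δ) * ∑' i, c i * dyadicScale (κ i) ^ s := by
  set T := ∑' k, dyadicScale k ^ δ
  have hT : T ≠ ⊤ := tsum_dyadicScale_rpow_ne_top hδ
  let heavy (k : ℕ) : Set Z :=
    {x | dyadicScale k ^ δ ≤ ∑' i : κ ⁻¹' {k}, (F i).indicator (fun _ => T * c i) x}
  have hcover : D ⊆ ⋃ k, heavy k := by
    refine fun x hx => mem_iUnion.2 (exists_le_tsum_fiber (κ := κ)
      (g := fun i => (F i).indicator (fun _ => T * c i) x) hT ?_)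
    simp only [indicator_const_mul, ENNReal.tsum_mul_left]
    exact le_mul_of_one_le_right' (hD x hx)
  have hheavy : ∀ k, dyadicContent (s + δ) (heavy k) ≤
      ∑' i : κ ⁻¹' {k}, T * (c i * dyadicScale (κ i) ^ s) := by
    intro k
    have h : dyadicContent (s + δ) (heavy k) * dyadicScale k ^ δ ≤
        (∑' i : κ ⁻¹' {k}, T * c i) * dyadicScale k ^ (s + δ) :=
      dyadicContent_mul_le_of_le_tsum_indicator (F := fun i : κ ⁻¹' {k} => F i)
        (fun i => (hF i).trans_eq (by rw [i.2])) fun _ hx => hx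
    rw [dyadicScale_rpow_add, ← mul_assoc,
      ENNReal.mul_le_mul_iff_left (dyadicScale_rpow_ne_zero k δ) (dyadicScale_rpow_ne_top k δ),
      ← ENNReal.tsum_mul_right] at h
    refine h.trans_eq (tsum_congr fun i => ?_)
    rw [mul_assoc, show κ i = k from i.2]
  calc dyadicContent (s + δ) D ≤ ∑' k, dyadicContent (s + δ) (heavy k) :=
        (measure_mono hcover).trans (measure_iUnion_le _)
    _ ≤ ∑' k, ∑' i : κ ⁻¹' {k}, T * (c i * dyadicScale (κ i) ^ s) :=
        ENNReal.tsum_le_tsum hheavy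
    _ = T * ∑' i, c i * dyadicScale (κ i) ^ s := by
        rw [ENNReal.tsum_fiberwise (fun i => T * (c i * dyadicScale (κ i) ^ s)) κ,
          ENNReal.tsum_mul_left]

end FractionalCover

lemma exists_seq_subsingleton_of_eventually_disjoint {Z ι α : Type*} {l : Filter α} [l.NeBot]
    {D : Set Z} {F : α → ι → Set Z} {P : Set ι} (hP : P.Finite) {E : α → Prop}
    (hE : ∀ᶠ n in l, E n)
    (hF : ∀ p ∈ P, (∀ᶠ n in l, Disjoint D (F n p)) ∨ ∀ m, ∀ᶠ n in l, Disjoint (F m p) (F n p)) :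
    ∃ f : ℕ → α, (∀ i, E (f i)) ∧ ∀ x ∈ D, ∀ p ∈ P, {i | x ∈ F (f i) p}.Subsingleton := by
  let away (p : ι) : Prop := ∀ᶠ n in l, Disjoint D (F n p)
  have haway : ∀ᶠ n in l, ∀ p ∈ P, away p → Disjoint D (F n p) :=
    (eventually_all_finite hP).2 fun p _ => eventually_imp_distrib_left.2 id
  let apart (m n : α) : Prop := ∀ p ∈ P, ¬ away p → Disjoint (F m p) (F n p)
  have : Std.Symm apart := ⟨fun _ _ h p hp hp' => (h p hp hp').symm⟩
  have hapart : ∀ m, ∀ᶠ n in l, apart m n := fun m =>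
    (eventually_all_finite hP).2 fun p hp =>
      eventually_imp_distrib_left.2 fun hp' => (hF p hp).resolve_left hp' m
  obtain ⟨f, hf, hpair⟩ := exists_seq_of_forall_finset_exists'
    (fun n => E n ∧ ∀ p ∈ P, away p → Disjoint D (F n p)) apart fun S _ =>
      ((hE.and haway).and ((Finset.eventually_all S).2 fun m _ => hapart m)).exists
  refine ⟨f, fun i => (hf i).1, fun x hx p hp i hi j hj => ?_⟩
  by_contra hij
  by_cases hp' : away p
  · exact disjoint_left.1 ((hf i).2 p hp hp') hx hi
  · exact disjoint_left.1 (hpair hij p hp hp') hi hj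

lemma ncard_setOf_exists_mem_le {α β : Type*} [Finite α] {P : Set β} (hP : P.Finite)
    {R : α → β → Prop} (hR : ∀ p ∈ P, {a | R a p}.Subsingleton) :
    {a | ∃ p ∈ P, R a p}.ncard ≤ P.ncard := by
  have hUnion : {a | ∃ p ∈ P, R a p} = ⋃ p ∈ hP.toFinset, {a | R a p} := by ext; simp
  rw [hUnion, ncard_eq_toFinset_card P hP, Finset.card_eq_sum_ones]
  exact (Finset.set_ncard_biUnion_le _ _).trans (Finset.sum_le_sum fun p hp =>
    ncard_le_one_iff_subsingleton.2 (hR p (hP.mem_toFinset.1 hp)))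

lemma coverCost_pred_le {Z ι : Type*} {s δ : ℝ} {κ : ι → ℕ} {F : ι → Set Z} {K : ℕ} (hδ : 0 ≤ δ)
    (hκ : ∀ p, K < κ p) :
    coverCost (s + δ) (fun p => κ p - 1) F ≤
      2 ^ (s + δ) * dyadicScale K ^ δ * coverCost s κ F := by
  simp only [coverCost, ← ENNReal.tsum_mul_left, ENNReal.mul_iSup]
  refine ENNReal.tsum_le_tsum fun p => iSup_mono fun _ => ?_
  calc dyadicScale (κ p - 1) ^ (s + δ)
      = 2 ^ (s + δ) * dyadicScale (κ p) ^ δ * dyadicScale (κ p) ^ s := by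
        rw [← two_mul_dyadicScale_succ, Nat.sub_add_cancel (K.zero_le.trans_lt (hκ p)),
          ENNReal.mul_rpow_of_ne_top (by simp) (dyadicScale_ne_top _), dyadicScale_rpow_add]
        ring
    _ ≤ 2 ^ (s + δ) * dyadicScale K ^ δ * dyadicScale (κ p) ^ s := by
        gcongr
        exact antitone_dyadicScale (hκ p).le

lemma one_le_tsum_of_card_le_two_mul_ncard {α : Type*} [Fintype α] [Nonempty α] {S : Set α}
    {g : α → ℝ≥0∞} (hS : Fintype.card α ≤ 2 * S.ncard)
    (hg : ∀ a ∈ S, 2 / (Fintype.card α : ℝ≥0∞) ≤ g a) : 1 ≤ ∑' a, g a := by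
  have htwo : 2 * 1 ≤ 2 * (S.encard * (2 / (Fintype.card α : ℝ≥0∞))) :=
    calc 2 * 1 = Fintype.card α * (2 / (Fintype.card α : ℝ≥0∞)) := by
          rw [ENNReal.mul_div_cancel (by simp) (by simp), mul_one]
      _ ≤ 2 * S.ncard * (2 / (Fintype.card α : ℝ≥0∞)) := by gcongr; exact_mod_cast hS
      _ = 2 * (S.encard * (2 / (Fintype.card α : ℝ≥0∞))) := by
          rw [mul_assoc, ← S.toFinite.cast_ncard_eq, ENat.toENNReal_coe]
  calc 1 ≤ S.encard * (2 / (Fintype.card α : ℝ≥0∞)) :=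
        (ENNReal.mul_le_mul_iff_right two_ne_zero ENNReal.ofNat_ne_top).1 htwo
    _ = ∑' _ : S, 2 / (Fintype.card α : ℝ≥0∞) := (ENNReal.tsum_set_const S _).symm
    _ ≤ ∑' a : S, g a := ENNReal.tsum_le_tsum fun a => hg a a.2
    _ ≤ ∑' a, g a := ENNReal.tsum_comp_le_tsum_of_injective Subtype.val_injective _

section NullSets

variable {Z : Type*} [PseudoEMetricSpace Z] {s δ : ℝ} {D : Set Z} {C : ℝ≥0∞}

lemma dyadicContent_le_of_half_cover {ι α : Type*} [Fintype α] [Nonempty α] {F : α → ι → Set Z}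
    {κ : ι → ℕ} (hδ : 0 < δ) (hF : ∀ a p, ediam (F a p) ≤ dyadicScale (κ p + 1))
    (hcost : ∀ a, coverCost s κ (F a) ≤ C)
    (hD : ∀ x ∈ D, Fintype.card α ≤ 2 * {a | x ∈ ⋃ p, F a p}.ncard) :
    dyadicContent (s + δ) D ≤ (∑' k, dyadicScale k ^ δ) * (2 * C) := by
  let w : ℝ≥0∞ := 2 / Fintype.card α
  have hw : Fintype.card α * w = 2 := ENNReal.mul_div_cancel (by simp) (by simp)
  let weight (q : α × ι) : ℝ≥0∞ := ⨆ _ : (F q.1 q.2).Nonempty, w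
  have hweight : ∀ x, ∀ a ∈ {a | x ∈ ⋃ p, F a p},
      w ≤ ∑' p, (F a p).indicator (fun _ => weight (a, p)) x := by
    intro x a hxa
    obtain ⟨p, hp⟩ := mem_iUnion.1 hxa
    refine le_trans (le_of_eq ?_) (ENNReal.le_tsum p)
    rw [indicator_of_mem hp]
    exact (iSup_pos (f := fun _ => w) ⟨x, hp⟩).symm
  have hone : ∀ x ∈ D, 1 ≤ ∑' q : α × ι, (F q.1 q.2).indicator (fun _ => weight q) x := by
    intro x hx
    rw [ENNReal.tsum_prod']
    exact one_le_tsum_of_card_le_two_mul_ncard (hD x hx) (hweight x)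
  refine (dyadicContent_le_tsum_of_fractional_cover (κ := fun q : α × ι => κ q.2) hδ
    (fun q => hF q.1 q.2) hone).trans ?_
  gcongr
  calc ∑' q : α × ι, weight q * dyadicScale (κ q.2) ^ s
      = ∑' a, w * coverCost s κ (F a) := by
        simp only [weight, coverCost, ENNReal.tsum_prod', ENNReal.iSup_mul, ENNReal.mul_iSup,
          ← ENNReal.tsum_mul_left]
    _ ≤ ∑' _ : α, w * C := ENNReal.tsum_le_tsum fun a => mul_le_mul_right (hcost a) w
    _ = 2 * C := by
        rw [tsum_fintype, Finset.sum_const, Finset.card_univ, nsmul_eq_mul, ← mul_assoc, hw]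

variable {ι α : Type*} {l : Filter α} [l.NeBot] {F : α → ι → Set Z} {κ : ι → ℕ}

lemma dyadicContent_le_of_eventually_disjoint (hδ : 0 < δ) (K : ℕ) (hK : {p | κ p ≤ K}.Finite)
    (hdiam : ∀ n p, ediam (F n p) ≤ dyadicScale (κ p)) (hcost : ∀ n, coverCost s κ (F n) ≤ C)
    (hcover : ∀ᶠ n in l, D ⊆ ⋃ p, F n p)
    (hF : ∀ p, (∀ᶠ n in l, Disjoint D (F n p)) ∨ ∀ m, ∀ᶠ n in l, Disjoint (F m p) (F n p)) :
    dyadicContent (s + δ + δ) D ≤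
      (∑' k, dyadicScale k ^ δ) * (2 * (2 ^ (s + δ) * dyadicScale K ^ δ * C)) := by
  obtain ⟨f, hf, hsub⟩ :=
    exists_seq_subsingleton_of_eventually_disjoint hK hcover fun p _ => hF p
  let N := 2 * {p | κ p ≤ K}.ncard + 1
  let tail (a : Fin N) (p : {p // K < κ p}) : Set Z := F (f a) p
  refine dyadicContent_le_of_half_cover (F := tail) (κ := fun p => κ p - 1) hδ ?_ ?_ ?_
  · intro a p
    rw [Nat.sub_add_cancel (K.zero_le.trans_lt p.2)]
    exact hdiam _ _
  · intro a
    refine (coverCost_pred_le hδ.le fun p => p.2).trans ?_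
    gcongr
    exact (ENNReal.tsum_comp_le_tsum_of_injective Subtype.val_injective _).trans (hcost (f a))
  · -- Each coarse member contains `x` in at most one of the `N` covers, so in more than half of
    -- them `x` lies in a fine member.
    intro x hx
    have hhead := ncard_setOf_exists_mem_le (α := Fin N) hK (R := fun a p => x ∈ F (f a) p)
      fun p hp => (hsub x hx p hp).preimage Fin.val_injective
    have hcompl : {a | x ∈ ⋃ p, tail a p}ᶜ ⊆ {a : Fin N | ∃ p ∈ {p | κ p ≤ K}, x ∈ F (f a) p} := by
      intro a ha
      obtain ⟨p, hp⟩ := mem_iUnion.1 (hf a hx)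
      exact ⟨p, not_lt.1 fun hKp => ha (mem_iUnion.2 ⟨⟨p, hKp⟩, hp⟩), hp⟩
    have hsum := ncard_add_ncard_compl {a | x ∈ ⋃ p, tail a p}
    have hle := ncard_le_ncard hcompl
    rw [Nat.card_eq_fintype_card] at hsum
    have hN : 2 * {p | κ p ≤ K}.ncard ≤ N := Nat.le_succ _
    rw [Fintype.card_fin] at hsum ⊢
    linarith [hN]

lemma dyadicContent_eq_zero_of_eventually_disjoint {t : ℝ} (hst : s < t) (hC : C ≠ ⊤)
    (hκ : Tendsto κ cofinite atTop)
    (hdiam : ∀ n p, ediam (F n p) ≤ dyadicScale (κ p)) (hcost : ∀ n, coverCost s κ (F n) ≤ C)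
    (hcover : ∀ᶠ n in l, D ⊆ ⋃ p, F n p)
    (hF : ∀ p, (∀ᶠ n in l, Disjoint D (F n p)) ∨ ∀ m, ∀ᶠ n in l, Disjoint (F m p) (F n p)) :
    dyadicContent t D = 0 := by
  obtain ⟨δ, hδ, rfl⟩ : ∃ δ > 0, t = s + δ + δ := ⟨(t - s) / 2, by linarith, by ring⟩
  have hhead : ∀ K, {p | κ p ≤ K}.Finite := fun K => by
    simpa using eventually_cofinite.1 (hκ.eventually_gt_atTop K)
  have hbound : ∀ K, dyadicContent (s + δ + δ) D ≤
      (∑' k, dyadicScale k ^ δ) * (2 * (2 ^ (s + δ) * C)) * dyadicScale K ^ δ := fun K =>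
    (dyadicContent_le_of_eventually_disjoint hδ K (hhead K) hdiam hcost hcover hF).trans_eq
      (by ring)
  have hconst : (∑' k, dyadicScale k ^ δ) * (2 * (2 ^ (s + δ) * C)) ≠ ⊤ :=
    ENNReal.mul_ne_top (tsum_dyadicScale_rpow_ne_top hδ) (ENNReal.mul_ne_top (by simp)
      (ENNReal.mul_ne_top (by simp [ENNReal.rpow_eq_top_iff]) hC))
  have hlim := ENNReal.Tendsto.const_mul (tendsto_dyadicScale_rpow hδ) (.inr hconst)
  rw [mul_zero] at hlim
  exact le_zero_iff.1 (ge_of_tendsto' hlim hbound)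

end NullSets

section SlottedCovers

variable {b : ℕ → ℕ}

lemma exists_injective_sigma_fin {ι : Type*} {κ : ι → ℕ}
    (h : ∀ k, (κ ⁻¹' {k}).encard ≤ b k) :
    ∃ g : ι → Σ k, Fin (b k), g.Injective ∧ ∀ i, (g i).1 = κ i := by
  have hfin : ∀ k, (κ ⁻¹' {k}).Finite := fun k => finite_of_encard_le_coe (h k)
  have hemb : ∀ k, Nonempty (κ ⁻¹' {k} ↪ Fin (b k)) := by
    intro k
    have := (hfin k).fintype
    refine Function.Embedding.nonempty_of_card_le ?_
    rw [Fintype.card_fin, ← Nat.card_eq_fintype_card, Nat.card_coe_set_eq]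
    exact ENat.toNat_le_of_le_natCast (h k)
  let e (k : ℕ) : {i // κ i = k} ↪ Fin (b k) := (hemb k).some
  exact ⟨Sigma.map id (fun k => e k) ∘ (Equiv.sigmaFiberEquiv κ).symm,
    (Function.injective_id.sigma_map fun k => (e k).injective).comp (Equiv.injective _),
    fun i => rfl⟩

lemma tendsto_sigma_fst_cofinite :
    Tendsto (Sigma.fst : (Σ k, Fin (b k)) → ℕ) cofinite atTop := by
  rw [← Nat.cofinite_eq_atTop]
  refine Tendsto.cofinite_of_finite_preimage_singleton fun k => ?_
  rw [← range_sigmaMk]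
  exact finite_range _

variable {Z : Type*} [PseudoEMetricSpace Z] {s : ℝ}

lemma exists_slotted_cover_of_dyadicContent_lt (hs : 0 < s) {A : Set Z} {c : ℝ≥0∞}
    (hb : ∀ k, c ≤ b k * dyadicScale k ^ s) (h : dyadicContent s A < c) :
    ∃ F : (Σ k, Fin (b k)) → Set Z, A ⊆ ⋃ p, F p ∧
      (∀ p, ediam (F p) ≤ dyadicScale p.1) ∧ coverCost s Sigma.fst F ≤ c := by
  obtain ⟨E, κ, hcover, hdiam, hcost⟩ := exists_cover_of_dyadicContent_lt hs h
  have hcard : ∀ k, (κ ⁻¹' {k}).encard ≤ b k := by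
    intro k
    rw [← ENat.toENNReal_le, ENat.toENNReal_coe,
      ← ENNReal.mul_le_mul_iff_left (dyadicScale_rpow_ne_zero k s) (dyadicScale_rpow_ne_top k s)]
    calc (κ ⁻¹' {k}).encard * dyadicScale k ^ s = ∑' i : κ ⁻¹' {k}, dyadicScale (κ i) ^ s := by
          rw [← ENNReal.tsum_set_const]
          exact tsum_congr fun i => by rw [i.2]
      _ ≤ ∑' i, dyadicScale (κ i) ^ s :=
          ENNReal.tsum_comp_le_tsum_of_injective Subtype.val_injective _
      _ ≤ b k * dyadicScale k ^ s := hcost.le.trans (hb k)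
  obtain ⟨g, hg, hgκ⟩ := exists_injective_sigma_fin hcard
  let F : (Σ k, Fin (b k)) → Set Z := Function.extend g E fun _ => ∅
  have hFg : ∀ i, F (g i) = E i := fun i => hg.extend_apply E _ i
  have hFempty : ∀ p ∉ range g, F p = ∅ := fun p hp => Function.extend_apply' E _ p hp
  refine ⟨F, hcover.trans (iUnion_subset fun i => ?_), fun p => ?_, ?_⟩
  · exact hFg i ▸ subset_iUnion F (g i)
  · by_cases hp : p ∈ range g
    · obtain ⟨i, rfl⟩ := hp
      rw [hFg, hgκ]
      exact hdiam i
    · simp [hFempty p hp]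
  · have hsupp : Function.support (fun p => ⨆ _ : (F p).Nonempty, dyadicScale p.1 ^ s) ⊆ range g :=
      fun p hp => by_contra fun hp' => hp (by simp [hFempty p hp'])
    rw [coverCost, ← hg.tsum_eq hsupp]
    exact (ENNReal.tsum_le_tsum fun i => iSup_le fun _ => by rw [hgκ]).trans hcost.le

end SlottedCovers

section LimitSets

variable {Z α : Type*} [PseudoEMetricSpace Z]

/-- The Kuratowski upper limit of a family of sets along a filter: the points each of whose
neighbourhoods meets the sets frequently. -/
def upperLimit (l : Filter α) (F : α → Set Z) : Set Z :=
  {x | ∀ V ∈ 𝓝 x, ∃ᶠ n in l, (F n ∩ V).Nonempty}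

lemma exists_nhds_eventually_disjoint_of_notMem_upperLimit {l : Filter α} {F : α → Set Z} {x : Z}
    (hx : x ∉ upperLimit l F) : ∃ V ∈ 𝓝 x, ∀ᶠ n in l, Disjoint V (F n) := by
  simp only [upperLimit, mem_ofPred_eq, not_forall, not_frequently,
    not_nonempty_iff_eq_empty] at hx
  obtain ⟨V, hV, hF⟩ := hx
  exact ⟨V, hV, hF.mono fun n hn => (disjoint_iff_inter_eq_empty.2 hn).symm⟩

lemma ediam_upperLimit_le (U : Ultrafilter α) {F : α → Set Z} {r : ℝ≥0∞}
    (hF : ∀ n, ediam (F n) ≤ r) : ediam (upperLimit U F) ≤ r := by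
  refine ediam_le fun x hx y hy => ENNReal.le_of_forall_pos_le_add fun ε hε _ => ?_
  have hε' : (0 : ℝ≥0∞) < ε / 2 := by simpa using hε.ne'
  obtain ⟨n, ⟨a, haF, hax⟩, b, hbF, hby⟩ :=
    ((Ultrafilter.frequently_iff_eventually.1 (hx _ (eball_mem_nhds x hε'))).and
      (Ultrafilter.frequently_iff_eventually.1 (hy _ (eball_mem_nhds y hε')))).exists
  calc edist x y ≤ edist x a + edist a b + edist b y := edist_triangle4 _ _ _ _
    _ ≤ ε / 2 + r + ε / 2 := by
        gcongr
        · exact (mem_eball'.1 hax).le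
        · exact (edist_le_ediam_of_mem haF hbF).trans (hF n)
        · exact (mem_eball.1 hby).le
    _ = r + ε := by rw [add_comm _ r, add_assoc, ENNReal.add_halves]

lemma exists_eventually_subset_or_eventually_disjoint (U : Ultrafilter α) {F : α → Set Z}
    {r : ℝ≥0} (hF : ∀ n, ediam (F n) ≤ r) :
    ∃ G : Set Z, ediam G ≤ 3 * r ∧ (G.Nonempty → ∀ᶠ n in U, (F n).Nonempty) ∧
      ((∀ᶠ n in U, F n ⊆ G) ∨ ∀ m, ∀ᶠ n in U, Disjoint (F m) (F n)) := by
  by_cases hdisj : ∀ m, ∀ᶠ n in U, Disjoint (F m) (F n)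
  · exact ⟨∅, by simp, by simp, .inr hdisj⟩
  · simp only [not_forall, ← Ultrafilter.eventually_not, not_disjoint_iff_nonempty_inter] at hdisj
    obtain ⟨m, hm⟩ := hdisj
    refine ⟨cthickening r (F m), ?_, fun _ => hm.mono fun n hn => hn.right,
      .inl <| hm.mono fun n hn y hy => ?_⟩
    · calc ediam (cthickening r (F m)) ≤ ediam (F m) + 2 * r := ediam_cthickening_le r
        _ ≤ r + 2 * r := by gcongr; exact hF m
        _ = 3 * r := by ring
    · obtain ⟨x, hxm, hxn⟩ := hn
      refine mem_cthickening_of_edist_le y x r (F m) hxm ?_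
      rw [ENNReal.ofReal_coe_nnreal]
      exact (edist_le_ediam_of_mem hy hxn).trans (hF n)

end LimitSets

section IncreasingSets

variable {Z α ι : Type*} {s t : ℝ} {c : ℝ≥0∞} {F : α → ι → Set Z} {κ : ι → ℕ}

lemma coverCost_le_of_eventually_nonempty {l : Filter α} [l.NeBot] {W : ι → Set Z}
    (hW : ∀ p, (W p).Nonempty → ∀ᶠ n in l, (F n p).Nonempty)
    (hcost : ∀ n, coverCost s κ (F n) ≤ c) : coverCost s κ W ≤ c := by
  rw [coverCost, ENNReal.tsum_eq_iSup_sum]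
  refine iSup_le fun S => ?_
  obtain ⟨n, hn⟩ := ((Finset.eventually_all S).2 fun p _ =>
    eventually_imp_distrib_left.2 (hW p)).exists
  exact (Finset.sum_le_sum fun p hp => iSup_const_mono (hn p hp)).trans
    ((ENNReal.sum_le_tsum S).trans (hcost n))

variable [PseudoEMetricSpace Z]

lemma eventually_dyadicContent_le_of_ediam_le (hst : s < t) :
    ∀ᶠ k in atTop, ∀ G : Set Z, ediam G ≤ 3 * dyadicScale k →
      dyadicContent t G ≤ dyadicScale k ^ s := by
  have hlim := ENNReal.Tendsto.const_mul (a := 4 ^ t) (tendsto_dyadicScale_rpow (sub_pos.2 hst))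
    (.inr (by simp [ENNReal.rpow_eq_top_iff]))
  rw [mul_zero] at hlim
  filter_upwards [hlim.eventually (ge_mem_nhds one_pos), eventually_ge_atTop 2] with k hk hk2 G hG
  have hscale : 4 * dyadicScale k = dyadicScale (k - 2) := by
    obtain ⟨j, rfl⟩ := Nat.exists_eq_add_of_le' hk2
    rw [Nat.add_sub_cancel, ← two_mul_dyadicScale_succ j, ← two_mul_dyadicScale_succ (j + 1),
      ← mul_assoc]
    norm_num
  have hG4 : ediam G ≤ dyadicScale (k - 2) :=
    hG.trans (hscale ▸ mul_le_mul_left (by norm_num) (dyadicScale k))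
  calc dyadicContent t G ≤ dyadicScale (k - 2) ^ t := dyadicContent_le hG4
    _ = 4 ^ t * dyadicScale k ^ (t - s) * dyadicScale k ^ s := by
        rw [← hscale, ENNReal.mul_rpow_of_ne_top (by simp) (dyadicScale_ne_top k), mul_assoc,
          ← dyadicScale_rpow_add, sub_add_cancel]
    _ ≤ dyadicScale k ^ s := mul_le_of_le_one_left' hk

lemma exists_limit_cover (U : Ultrafilter α) (hst : s < t) (hκ : Tendsto κ cofinite atTop)
    (hdiam : ∀ n p, ediam (F n p) ≤ dyadicScale (κ p)) :
    ∃ W : ι → Set Z, (∀ p, dyadicContent t (W p) ≤ dyadicScale (κ p) ^ s) ∧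
      (∀ p, (W p).Nonempty → ∀ᶠ n in U, (F n p).Nonempty) ∧
      ∀ x ∉ ⋃ p, W p, ∃ V ∈ 𝓝 x, ∀ p, (∀ᶠ n in U, Disjoint (V \ ⋃ q, W q) (F n p)) ∨
        ∀ m, ∀ᶠ n in U, Disjoint (F m p) (F n p) := by
  let fine (p : ι) : Prop := ∀ G : Set Z, ediam G ≤ 3 * dyadicScale (κ p) →
    dyadicContent t G ≤ dyadicScale (κ p) ^ s
  have hcoarse : {p | ¬ fine p}.Finite :=
    eventually_cofinite.1 (hκ.eventually (eventually_dyadicContent_le_of_ediam_le hst))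
  have hlimit : ∀ p, ∃ W : Set Z, dyadicContent t W ≤ dyadicScale (κ p) ^ s ∧
      (W.Nonempty → ∀ᶠ n in U, (F n p).Nonempty) ∧
      (fine p → (∀ᶠ n in U, F n p ⊆ W) ∨ ∀ m, ∀ᶠ n in U, Disjoint (F m p) (F n p)) ∧
      (¬ fine p → ∀ x ∉ W, ∃ V ∈ 𝓝 x, ∀ᶠ n in U, Disjoint V (F n p)) := by
    intro p
    by_cases hp : fine p
    · lift dyadicScale (κ p) to ℝ≥0 using dyadicScale_ne_top _ with r hr
      obtain ⟨G, hG, hne, hdich⟩ :=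
        exists_eventually_subset_or_eventually_disjoint U (hr ▸ fun n => hdiam n p)
      exact ⟨G, hr ▸ hp G (hr ▸ hG), hne, fun _ => hdich, fun hp' => absurd hp hp'⟩
    · refine ⟨upperLimit U fun n => F n p, ?_, ?_, fun hp' => absurd hp' hp,
        fun _ x => exists_nhds_eventually_disjoint_of_notMem_upperLimit⟩
      · exact (dyadicContent_le (ediam_upperLimit_le U fun n => hdiam n p)).trans
          (dyadicScale_rpow_le_of_exponent_ge _ hst.le)
      · rintro ⟨x, hx⟩
        exact (hx univ univ_mem).eventually.mono fun n hn => hn.left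
  choose W hcontent hne hsubset hlocal using hlimit
  refine ⟨W, hcontent, hne, fun x hx => ?_⟩
  choose! V hV hVF using fun p (hp : ¬ fine p) => hlocal p hp x fun h => hx (mem_iUnion_of_mem p h)
  refine ⟨⋂ p ∈ {p | ¬ fine p}, V p, (biInter_mem hcoarse).2 hV, fun p => ?_⟩
  by_cases hp : fine p
  · refine (hsubset p hp).imp_left fun h => h.mono fun n hn => ?_
    exact disjoint_sdiff_left.mono_right (hn.trans (subset_iUnion W p))
  · exact .inl <| (hVF p hp).mono fun n hn =>
      hn.mono_left (sdiff_subset.trans (biInter_subset_of_mem hp))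

lemma dyadicContent_iUnion_le_of_ultrafilter_cover [SecondCountableTopology Z] [Countable ι]
    (U : Ultrafilter α) (hst : s < t) (hc : c ≠ ⊤) (hκ : Tendsto κ cofinite atTop)
    (hdiam : ∀ n p, ediam (F n p) ≤ dyadicScale (κ p)) (hcost : ∀ n, coverCost s κ (F n) ≤ c)
    {A : ℕ → Set Z} (hA : ∀ N, ∀ᶠ n in U, A N ⊆ ⋃ p, F n p) :
    dyadicContent t (⋃ N, A N) ≤ c := by
  obtain ⟨W, hcontent, hne, hlocal⟩ := exists_limit_cover U hst hκ hdiam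
  have hW : dyadicContent t (⋃ p, W p) ≤ c := by
    refine (measure_iUnion_le W).trans (le_trans (ENNReal.tsum_le_tsum fun p => ?_)
      (coverCost_le_of_eventually_nonempty hne hcost))
    rcases (W p).eq_empty_or_nonempty with hp | hp
    · simp [hp]
    · exact (hcontent p).trans_eq (iSup_pos (f := fun _ => dyadicScale (κ p) ^ s) hp).symm
  have hnull : dyadicContent t ((⋃ N, A N) \ ⋃ p, W p) = 0 := by
    refine measure_null_of_locally_null _ fun x hx => ?_
    obtain ⟨V, hV, hdisj⟩ := hlocal x hx.2
    refine ⟨((⋃ N, A N) \ ⋃ p, W p) ∩ V, inter_mem_nhdsWithin _ hV, ?_⟩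
    refine measure_mono_null (t := ⋃ N, A N ∩ (V \ ⋃ p, W p)) ?_ (measure_iUnion_null fun N => ?_)
    · rw [← iUnion_inter]
      exact fun y hy => ⟨hy.1.1, hy.2, hy.1.2⟩
    · exact dyadicContent_eq_zero_of_eventually_disjoint hst hc hκ hdiam hcost
        ((hA N).mono fun n hn => inter_subset_left.trans hn)
        fun p => (hdisj p).imp_left fun h => h.mono fun n hn => hn.mono_left inter_subset_right
  calc dyadicContent t (⋃ N, A N)
      ≤ dyadicContent t ((⋃ p, W p) ∪ (⋃ N, A N) \ ⋃ p, W p) :=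
        measure_mono (by rw [union_sdiff_self]; exact subset_union_right)
    _ ≤ dyadicContent t (⋃ p, W p) + dyadicContent t ((⋃ N, A N) \ ⋃ p, W p) :=
        measure_union_le _ _
    _ ≤ c := by rwa [hnull, add_zero]

lemma exists_lt_dyadicContent_of_lt_dyadicContent_iUnion [SecondCountableTopology Z] (hs : 0 < s)
    (hst : s < t) {A : ℕ → Set Z} (hA : Monotone A) (h : c < dyadicContent t (⋃ n, A n)) :
    ∃ n, c < dyadicContent s (A n) := by
  by_contra! hle
  obtain ⟨c', hcc', hc'⟩ := exists_between h
  have hb : ∀ k, ∃ b : ℕ, c' ≤ b * dyadicScale k ^ s := by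
    intro k
    obtain ⟨b, hb⟩ :=
      ENNReal.exists_nat_mul_gt (dyadicScale_rpow_ne_zero k s) (hc'.trans_le le_top).ne
    exact ⟨b, hb.le⟩
  choose b hb using hb
  choose F hcover hdiam hcost using fun n =>
    exists_slotted_cover_of_dyadicContent_lt hs hb ((hle n).trans_lt hcc')
  refine hc'.not_ge (dyadicContent_iUnion_le_of_ultrafilter_cover (hyperfilter ℕ) hst
    (hc'.trans_le le_top).ne tendsto_sigma_fst_cofinite hdiam hcost fun N => ?_)
  filter_upwards [Nat.hyperfilter_le_atTop (eventually_ge_atTop N)] with n hn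
  exact (hA hn).trans (hcover n)

end IncreasingSets

section Boxes

/-- The sequences of natural numbers whose first `m` terms are bounded by those of `φ`. -/
def box (φ : ℕ → ℕ) (m : ℕ) : Set (ℕ → ℕ) := (Iio m).pi fun i => Iic (φ i)

lemma box_zero (φ : ℕ → ℕ) : box φ 0 = univ := by simp [box]

lemma box_succ (φ : ℕ → ℕ) (m : ℕ) : box φ (m + 1) = box φ m ∩ {σ | σ m ≤ φ m} := by
  rw [box, ← Order.succ_eq_add_one, Order.Iio_succ_eq_insert, insert_pi, inter_comm]
  rfl

lemma isCompact_Iic_nat_pi (φ : ℕ → ℕ) : IsCompact (Iic φ) := by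
  rw [← pi_univ_Iic]
  exact isCompact_univ_pi fun i => (finite_Iic (φ i)).isCompact

lemma exists_box_subset_of_Iic_subset {φ : ℕ → ℕ} {V : Set (ℕ → ℕ)} (hV : IsOpen V)
    (h : Iic φ ⊆ V) : ∃ m, box φ m ⊆ V := by
  let _ : MetricSpace (ℕ → ℕ) := PiNat.metricSpaceNatNat
  obtain ⟨δ, hδ, hthick⟩ := (isCompact_Iic_nat_pi φ).exists_thickening_subset_open hV h
  obtain ⟨m, hm⟩ := exists_pow_lt_of_lt_one hδ (by norm_num : (1 / 2 : ℝ) < 1)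
  refine ⟨m, fun σ hσ => hthick (mem_thickening_iff.2 ⟨σ ⊓ φ, mem_Iic.2 inf_le_right, ?_⟩)⟩
  refine (PiNat.mem_cylinder_iff_dist_le.1 fun i hi => ?_).trans_lt hm
  exact (min_eq_left (hσ i hi)).symm

lemma exists_forall_box_of_monotone_iUnion {P : ℕ → Set (ℕ → ℕ) → Prop} (h0 : P 0 univ)
    (hP : ∀ m (S : ℕ → Set (ℕ → ℕ)), Monotone S → P m (⋃ n, S n) → ∃ n, P (m + 1) (S n)) :
    ∃ φ, ∀ m, P m (box φ m) := by
  have hstep : ∀ m B, P m B → ∃ n, P (m + 1) (B ∩ {σ | σ m ≤ n}) := by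
    intro m B hB
    refine hP m (fun n => B ∩ {σ | σ m ≤ n})
      (fun a b hab => inter_subset_inter_right B fun σ hσ => le_trans hσ hab) ?_
    rwa [← inter_iUnion, iUnion_eq_univ_iff.2 fun σ => ⟨σ m, by simp⟩, inter_univ]
  choose! N hN using hstep
  let B : ℕ → Set (ℕ → ℕ) := fun m => Nat.rec univ (fun m B => B ∩ {σ | σ m ≤ N m B}) m
  have hB : ∀ m, P m (B m) := fun m => by
    induction m with
    | zero => exact h0
    | succ m ih => exact hN m _ ih
  have hbox : ∀ m, box (fun m => N m (B m)) m = B m := fun m => by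
    induction m with
    | zero => exact box_zero _
    | succ m ih => rw [box_succ, ih]
  exact ⟨fun m => N m (B m), fun m => hbox m ▸ hB m⟩

end Boxes

section InnerApproximation

variable {Z : Type*} [PseudoEMetricSpace Z] {s t : ℝ}

lemma exists_isOpen_superset_ediam_le {A : Set Z} {r : ℝ≥0∞} (hr : r ≠ 0) (hA : ediam A ≤ r) :
    ∃ G ⊇ A, IsOpen G ∧ ediam G ≤ 2 * r := by
  rcases eq_or_ne r ⊤ with rfl | hr'
  · exact ⟨univ, subset_univ A, isOpen_univ, by simp⟩
  · lift r to ℝ≥0 using hr'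
    have hr2 : 0 < (r : ℝ) / 2 := half_pos (NNReal.coe_pos.2 (pos_iff_ne_zero.2 (mod_cast hr)))
    refine ⟨thickening (r / 2) A, self_subset_thickening hr2 A, isOpen_thickening, ?_⟩
    calc ediam (thickening ↑(r / 2) A) ≤ ediam A + 2 * (r / 2 : ℝ≥0) := ediam_thickening_le _
      _ ≤ r + 2 * (r / 2 : ℝ≥0) := by gcongr
      _ = 2 * r := by rw [two_mul (r : ℝ≥0∞)]; norm_cast; rw [mul_div_cancel₀ _ two_ne_zero]

lemma exists_isOpen_superset_dyadicContent_le (ht : 0 < t) {K : Set Z}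
    (hK : dyadicContent t K = 0) {ε : ℝ≥0∞} (hε : ε ≠ 0) :
    ∃ V ⊇ K, IsOpen V ∧ dyadicContent t V ≤ ε := by
  have hpow : (2 : ℝ≥0∞) ^ t ≠ ⊤ := by simp [ENNReal.rpow_eq_top_iff]
  obtain ⟨F, κ, hcover, hdiam, hcost⟩ := exists_cover_of_dyadicContent_lt ht
    (hK.trans_lt (lt_min one_pos (ENNReal.div_pos hε hpow)))
  have hκ : ∀ i, κ i ≠ 0 := fun i hi =>
    ((ENNReal.le_tsum i).trans_lt (hcost.trans_le (min_le_left _ _))).ne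
      (by rw [hi, dyadicScale_zero, ENNReal.one_rpow])
  have hscale : ∀ i, 2 * dyadicScale (κ i) = dyadicScale (κ i - 1) := fun i => by
    rw [← two_mul_dyadicScale_succ (κ i - 1), Nat.sub_one_add_one (hκ i)]
  choose G hFG hGopen hG using fun i =>
    exists_isOpen_superset_ediam_le (dyadicScale_ne_zero _) (hdiam i)
  refine ⟨⋃ i, G i, hcover.trans (iUnion_mono hFG), isOpen_iUnion hGopen, ?_⟩
  calc dyadicContent t (⋃ i, G i) ≤ ∑' i, dyadicContent t (G i) := measure_iUnion_le G
    _ ≤ ∑' i, dyadicScale (κ i - 1) ^ t :=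
        ENNReal.tsum_le_tsum fun i => dyadicContent_le (hscale i ▸ hG i)
    _ = 2 ^ t * ∑' i, dyadicScale (κ i) ^ t := by
        simp_rw [← hscale, ENNReal.mul_rpow_of_nonneg _ _ ht.le, ENNReal.tsum_mul_left]
    _ ≤ 2 ^ t * (ε / 2 ^ t) := by gcongr; exact hcost.le.trans (min_le_right _ _)
    _ ≤ ε := ENNReal.mul_div_le

lemma exists_dyadicContent_image_Iic_ne_zero [SecondCountableTopology Z] {f : (ℕ → ℕ) → Z}
    (hf : Continuous f) (ht : 0 < t) (hts : t < s) (h : dyadicContent s (range f) ≠ 0) :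
    ∃ φ, dyadicContent t (f '' Iic φ) ≠ 0 := by
  obtain ⟨c, hc0, hc⟩ := exists_between (pos_iff_ne_zero.2 h)
  obtain ⟨u, hu, humem, -⟩ := exists_seq_strictAnti_tendsto' hts
  obtain ⟨φ, hφ⟩ := exists_forall_box_of_monotone_iUnion 
    (P := fun m B => c < dyadicContent (u m) (f '' B))
    (by rw [image_univ]; exact hc.trans_le (dyadicContent_le_of_exponent_ge (humem 0).2.le _))
    fun m S hS hlt => exists_lt_dyadicContent_of_lt_dyadicContent_iUnion
      (ht.trans (humem _).1) (hu m.lt_succ_self) (fun _ _ hab => image_mono (hS hab))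
      (by rwa [← image_iUnion])
  refine ⟨φ, fun hzero => ?_⟩
  obtain ⟨V, hV, hVopen, hVc⟩ := exists_isOpen_superset_dyadicContent_le ht hzero hc0.ne'
  obtain ⟨m, hm⟩ := exists_box_subset_of_Iic_subset (hVopen.preimage hf) (image_subset_iff.1 hV)
  exact (hφ m).not_ge <| (dyadicContent_le_of_exponent_ge (humem m).1.le _).trans <|
    (measure_mono (image_subset_iff.2 hm)).trans hVc

lemma exists_isCompact_subset_dyadicContent_ne_zero {X : Set Z} (hX : AnalyticSet X) (ht : 0 < t)
    (hts : t < s) (h : dyadicContent s X ≠ 0) : ∃ K ⊆ X, IsCompact K ∧ dyadicContent t K ≠ 0 := by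
  rw [AnalyticSet] at hX
  rcases hX with rfl | ⟨f, hf, rfl⟩
  · exact absurd measure_empty h
  have hf' : Continuous (rangeFactorization f) := hf.codRestrict _
  have := rangeFactorization_surjective (f := f) |>.denseRange.separableSpace hf'
  have := UniformSpace.secondCountable_of_separable (range f)
  have himage : ∀ r (A : Set (ℕ → ℕ)),
      dyadicContent r (rangeFactorization f '' A) = dyadicContent r (f '' A) := fun r A => by
    rw [← dyadicContent_image_of_isometry isometry_subtype_coe, ← image_comp]
    rfl
  obtain ⟨φ, hφ⟩ := exists_dyadicContent_image_Iic_ne_zero hf' ht hts (s := s)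
    (by rwa [← image_univ (f := rangeFactorization f), himage, image_univ])
  exact ⟨f '' Iic φ, image_subset_range f _, (isCompact_Iic_nat_pi φ).image hf, himage t _ ▸ hφ⟩

end InnerApproximation

section Duality

variable {E ι : Type*} [AddCommGroup E] [PartialOrder E] [Module ℝ E] [PosSMulMono ℝ E]
  {u : E} {e : ι → E} {w : ι → ℝ}

lemma le_sum_of_smul_le_sum (hw : ∀ i, 0 ≤ w i)
    (h : ∀ c : ι →₀ ℝ≥0, u ≤ c.sum (fun i a => a • e i) → 1 ≤ c.sum fun i a => a * w i)
    {r : ℝ} {c : ι →₀ ℝ≥0} (hr : r • u ≤ c.sum fun i a => a • e i) :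
    r ≤ c.sum fun i a => a * w i := by
  rcases le_or_gt r 0 with hr0 | hr0
  · exact hr0.trans (Finsupp.sum_nonneg fun i _ => mul_nonneg (c i).2 (hw i))
  lift r to ℝ≥0 using hr0.le
  have := h (r⁻¹ • c) <| by
    rw [Finsupp.sum_smul_index (by simp)]
    have := smul_le_smul_of_nonneg_left hr (inv_nonneg.2 hr0.le)
    rw [inv_smul_smul₀ hr0.ne', Finsupp.smul_sum] at this
    simpa only [mul_smul, NNReal.smul_def, NNReal.coe_inv] using this
  rw [Finsupp.sum_smul_index (by simp)] at this
  simpa [mul_assoc, ← Finsupp.mul_sum, hr0, le_inv_mul_iff₀] using this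

lemma exists_positiveLinearMap_le [IsOrderedAddMonoid E] (hu : ∀ x : E, ∃ r : ℝ, x ≤ r • u)
    (hw : ∀ i, 0 ≤ w i)
    (h : ∀ c : ι →₀ ℝ≥0, u ≤ c.sum (fun i a => a • e i) → 1 ≤ c.sum fun i a => a * w i) :
    ∃ L : E →ₚ[ℝ] ℝ, L u = 1 ∧ ∀ i, L (e i) ≤ w i := by
  have hu0 : u ≠ 0 := fun h0 => absurd (h 0 (by simp [h0])) (by simp)
  let C : PointedCone ℝ E := PointedCone.positive ℝ E ⊔
    Submodule.span ℝ≥0 (range fun i => w i • u - e i)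
  let f : E →ₗ.[ℝ] ℝ := LinearPMap.mkSpanSingleton u (1 : ℝ) hu0
  have hf (a : ℝ) (ha : a • u ∈ f.domain) : f ⟨a • u, ha⟩ = a :=
    (LinearPMap.mkSpanSingleton'_apply u (1 : ℝ) _ a ha).trans (mul_one a)
  obtain ⟨L, hLf, hLC⟩ := riesz_extension C f
    (by
      rintro ⟨x, hx⟩ hxC
      obtain ⟨a, rfl⟩ := Submodule.mem_span_singleton.1 hx
      obtain ⟨p, hp, q, hq, hpq : p + q = a • u⟩ := Submodule.mem_sup.1 hxC
      obtain ⟨c, hc : (c.sum fun i b => b • (w i • u - e i)) = q⟩ :=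
        (Finsupp.mem_span_range_iff_exists_finsupp (R := ℝ≥0)).1 hq
      have hsplit : q = (c.sum fun i b => b * w i) • u - c.sum fun i b => b • e i := by
        simp only [← hc, Finsupp.sum, smul_sub, Finset.sum_sub_distrib, Finset.sum_smul,
          mul_smul, NNReal.smul_def]
      have := le_sum_of_smul_le_sum hw h (r := (c.sum fun i b => b * w i) - a) (c := c) <| by
        rw [sub_smul, ← hpq, hsplit, sub_le_comm]
        exact le_add_of_nonneg_left ((PointedCone.mem_positive ℝ E).1 hp)
      rw [hf]
      linarith)
    (fun x => by
      obtain ⟨r, hr⟩ := hu (-x)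
      refine ⟨⟨r • u, Submodule.mem_span_singleton.2 ⟨r, rfl⟩⟩, Submodule.mem_sup_left ?_⟩
      rw [PointedCone.mem_positive]
      exact neg_le_iff_add_nonneg.1 hr)
  have hLu : L u = 1 := by
    simpa using (hLf ⟨(1 : ℝ) • u, Submodule.mem_span_singleton.2 ⟨1, rfl⟩⟩).trans (hf 1 _)
  refine ⟨.mk₀ L fun x hx => hLC x (Submodule.mem_sup_left hx), hLu, fun i => ?_⟩
  have := hLC _ (Submodule.mem_sup_right (Submodule.subset_span ⟨i, rfl⟩))
  rw [map_sub, map_smul, hLu, smul_eq_mul, mul_one, sub_nonneg] at this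
  exact this

end Duality

open CompactlySupported in
lemma exists_isProbabilityMeasure_integral_le {Y ι : Type*} [TopologicalSpace Y] [CompactSpace Y]
    [T2Space Y] [MeasurableSpace Y] [BorelSpace Y] {e : ι → C(Y, ℝ)} {w : ι → ℝ}
    (hw : ∀ i, 0 ≤ w i)
    (h : ∀ c : ι →₀ ℝ≥0, (∀ y, 1 ≤ c.sum fun i a => a * e i y) → 1 ≤ c.sum fun i a => a * w i) :
    ∃ μ : Measure Y, IsProbabilityMeasure μ ∧ ∀ i, ∫ y, e i y ∂μ ≤ w i := by
  obtain ⟨L, hL1, hLe⟩ := exists_positiveLinearMap_le (u := (1 : C(Y, ℝ))) (e := e)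
    (fun f => (isCompact_range f.continuous).bddAbove.imp fun r hr y => by
      simpa using hr (mem_range_self y)) hw
    (fun c hc => h c fun y => by
      simpa [Finsupp.sum, ContinuousMap.sum_apply, NNReal.smul_def] using hc y)
  let Λ : C_c(Y, ℝ) →ₚ[ℝ] ℝ := .mk₀
    { toFun := fun f => L f.toContinuousMap
      map_add' := fun f g => map_add L f.toContinuousMap g.toContinuousMap
      map_smul' := fun r f => map_smul L r f.toContinuousMap }
    fun f hf => L.map_nonneg hf
  have hΛ (f : C(Y, ℝ)) : ∫ y, f y ∂(RealRMK.rieszMeasure Λ) = L f :=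
    RealRMK.integral_rieszMeasure Λ (CompactlySupportedContinuousMap.continuousMapEquiv f)
  exact ⟨RealRMK.rieszMeasure Λ, isProbabilityMeasure_iff_real.2 (by simpa [hL1] using hΛ 1),
    fun i => (hΛ (e i)).trans_le (hLe i)⟩

lemma exists_continuousMap_eq_one_of_mem_closedEBall {Y : Type*} [PseudoEMetricSpace Y] (z : Y)
    {r R : ℝ≥0∞} (h : r < R) : ∃ f : C(Y, ℝ), (∀ y ∈ closedEBall z r, f y = 1) ∧
      0 ≤ f ∧ ∀ y, f y ≤ (eball z R).indicator 1 y := by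
  obtain ⟨f, hf0, hf1, hf⟩ := exists_continuous_zero_one_of_isClosed
    isOpen_eball.isClosed_compl isClosed_closedEBall
    (disjoint_compl_left_iff_subset.2 fun y (hy : y ∈ closedEBall z r) =>
      (mem_closedEBall.1 hy).trans_lt h : Disjoint (eball z R)ᶜ (closedEBall z r))
  refine ⟨f, hf1, fun y => (hf y).1, fun y => ?_⟩
  by_cases hy : y ∈ eball z R
  · simpa [hy] using (hf y).2
  · simpa [hy] using (hf0 hy).le

section Frostman

variable {Y : Type*} {s δ : ℝ}

lemma dyadicContent_univ_le_of_one_le_finsuppSum [PseudoEMetricSpace Y] {ι : Type*} {F : ι → Set Y}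
    {κ : ι → ℕ} {e : ι → Y → ℝ} {c : ι →₀ ℝ≥0} (hδ : 0 < δ)
    (hF : ∀ i, ediam (F i) ≤ dyadicScale (κ i + 1)) (he : ∀ i y, e i y ≤ (F i).indicator 1 y)
    (hc : ∀ y, 1 ≤ c.sum fun i a => a * e i y) :
    dyadicContent (s + δ) (univ : Set Y) ≤ (∑' k, dyadicScale k ^ δ) *
      ENNReal.ofReal (c.sum fun i a => a * (dyadicScale (κ i) ^ s).toReal) := by
  refine (dyadicContent_le_tsum_of_fractional_cover (s := s) (c := fun i => (c i : ℝ≥0∞)) hδ hF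
    fun y _ => ?_).trans_eq ?_
  · calc (1 : ℝ≥0∞) ≤ ENNReal.ofReal (c.sum fun i a => a * e i y) := by simpa using hc y
      _ ≤ ∑ i ∈ c.support, ENNReal.ofReal (c i * e i y) :=
          Finset.le_sum_of_subadditive _ ENNReal.ofReal_zero.le
            (fun _ _ => ENNReal.ofReal_add_le) _ _
      _ ≤ ∑ i ∈ c.support, (F i).indicator (fun _ => (c i : ℝ≥0∞)) y := by
          refine Finset.sum_le_sum fun i _ => ?_
          have := ENNReal.ofReal_le_ofReal (mul_le_mul_of_nonneg_left (he i y) (c i).2)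
          by_cases hy : y ∈ F i <;> simpa [hy] using this
      _ ≤ _ := ENNReal.sum_le_tsum _
  · rw [tsum_eq_sum (s := c.support) (fun i hi => by simp [Finsupp.notMem_support_iff.1 hi]),
      Finsupp.sum, ENNReal.ofReal_sum_of_nonneg fun _ _ => by positivity]
    simp [ENNReal.ofReal_mul, ENNReal.ofReal_toReal (dyadicScale_rpow_ne_top _ _)]

variable [EMetricSpace Y] [CompactSpace Y] [MeasurableSpace Y] [BorelSpace Y]

lemma exists_isProbabilityMeasure_closedEBall_add_three_le (hδ : 0 < δ)
    (h : dyadicContent (s + δ) (univ : Set Y) ≠ 0) :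
    ∃ μ : Measure Y, IsProbabilityMeasure μ ∧ ∃ C ≠ ⊤, ∀ z k,
      μ (closedEBall z (dyadicScale (k + 3))) ≤ C * dyadicScale k ^ s := by
  obtain ⟨ε, hε0, hε⟩ := exists_between (pos_iff_ne_zero.2 h)
  set C := (∑' k, dyadicScale k ^ δ) / ε
  have hC : C ≠ ⊤ := ENNReal.div_ne_top (tsum_dyadicScale_rpow_ne_top hδ) hε0.ne'
  choose e he1 he0 heF using fun i : Y × ℕ =>
    exists_continuousMap_eq_one_of_mem_closedEBall i.1
      (r := dyadicScale (i.2 + 3)) (R := dyadicScale (i.2 + 2)) (dyadicScale_succ_lt _)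
  obtain ⟨μ, hμ, hle⟩ := exists_isProbabilityMeasure_integral_le (e := e)
    (w := fun i => C.toReal * (dyadicScale i.2 ^ s).toReal) (fun i => by positivity)
    (fun c hc => by
      have hcost := hε.le.trans <| dyadicContent_univ_le_of_one_le_finsuppSum (κ := Prod.snd)
        (s := s) hδ (fun i => ediam_eball_le.trans_eq (two_mul_dyadicScale_succ _)) heF hc
      have hsum : (c.sum fun i a => a * (C.toReal * (dyadicScale i.2 ^ s).toReal)) =
          C.toReal * c.sum fun i a => a * (dyadicScale i.2 ^ s).toReal := by
        simp only [Finsupp.mul_sum, mul_left_comm]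
      rw [← ENNReal.one_le_ofReal, hsum, ENNReal.ofReal_mul (by simp), ENNReal.ofReal_toReal hC,
        ← ENNReal.mul_div_right_comm, ENNReal.le_div_iff_mul_le (.inl hε0.ne') (.inl hε.ne_top),
        one_mul]
      exact hcost)
  refine ⟨μ, hμ, C, hC, fun z k => ?_⟩
  have hmarkov := mul_meas_ge_le_integral_of_nonneg (μ := μ) (Eventually.of_forall (he0 (z, k)))
    ((e (z, k)).continuous.integrable_of_hasCompactSupport (.of_compactSpace _)) 1
  rw [one_mul] at hmarkov
  calc μ (closedEBall z (dyadicScale (k + 3)))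
      ≤ μ {y | 1 ≤ e (z, k) y} := measure_mono fun y hy => (he1 (z, k) y hy).ge
    _ = ENNReal.ofReal (μ.real {y | 1 ≤ e (z, k) y}) := by simp
    _ ≤ ENNReal.ofReal (C.toReal * (dyadicScale k ^ s).toReal) :=
        ENNReal.ofReal_le_ofReal (hmarkov.trans (hle (z, k)))
    _ = C * dyadicScale k ^ s := by
        rw [← ENNReal.toReal_mul, ENNReal.ofReal_toReal]
        exact ENNReal.mul_ne_top hC (dyadicScale_rpow_ne_top k s)

lemma exists_isProbabilityMeasure_closedEBall_le (hs : 0 ≤ s) (hδ : 0 < δ)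
    (h : dyadicContent (s + δ) (univ : Set Y) ≠ 0) :
    ∃ μ : Measure Y, IsProbabilityMeasure μ ∧ ∃ C ≠ ⊤, ∀ z k,
      μ (closedEBall z (dyadicScale k)) ≤ C * dyadicScale k ^ s := by
  obtain ⟨μ, hμ, C, hC, hle⟩ := exists_isProbabilityMeasure_closedEBall_add_three_le hδ h
  have h3 : (dyadicScale 3 ^ s)⁻¹ ≠ ⊤ := ENNReal.inv_ne_top.2 (dyadicScale_rpow_ne_zero 3 s)
  refine ⟨μ, hμ, (C + 1) * (dyadicScale 3 ^ s)⁻¹,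
    ENNReal.mul_ne_top (ENNReal.add_ne_top.2 ⟨hC, ENNReal.one_ne_top⟩) h3, fun z k => ?_⟩
  rw [mul_assoc, mul_comm _ (dyadicScale k ^ s), ← div_eq_mul_inv]
  rcases lt_or_ge k 3 with hk | hk
  · refine prob_le_one.trans (one_le_mul le_add_self ?_)
    rw [ENNReal.le_div_iff_mul_le (.inl (dyadicScale_rpow_ne_zero 3 s))
      (.inl (dyadicScale_rpow_ne_top 3 s)), one_mul]
    exact ENNReal.rpow_le_rpow (antitone_dyadicScale hk.le) hs
  · obtain ⟨j, rfl⟩ := Nat.exists_eq_add_of_le' hk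
    refine (hle z j).trans (mul_le_mul' le_self_add ?_)
    rw [dyadicScale_add,
      ENNReal.mul_rpow_of_ne_zero (dyadicScale_ne_zero j) (dyadicScale_ne_zero 3),
      ENNReal.mul_div_cancel_right (dyadicScale_rpow_ne_zero 3 s) (dyadicScale_rpow_ne_top 3 s)]

end Frostman

section Energy

lemma exists_dyadicScale_succ_lt_le {d : ℝ≥0∞} (h0 : d ≠ 0) (h1 : d ≤ 1) :
    ∃ k, dyadicScale (k + 1) < d ∧ d ≤ dyadicScale k := by
  have hex : ∃ k, dyadicScale k < d := by
    have := (tendsto_dyadicScale_rpow one_pos).eventually (gt_mem_nhds (pos_iff_ne_zero.2 h0))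
    simpa only [ENNReal.rpow_one] using this.exists
  classical
  obtain ⟨k, hk⟩ := Nat.exists_eq_succ_of_ne_zero (n := Nat.find hex) fun h => by
    have := Nat.find_spec hex
    rw [h, dyadicScale_zero] at this
    exact this.not_ge h1
  exact ⟨k, (congrArg dyadicScale hk).symm.trans_lt (Nat.find_spec hex),
    not_lt.1 (Nat.find_min hex (by lia))⟩

lemma rpow_neg_le_one_add_tsum_indicator {s : ℝ} (hs : 0 < s) (d : ℝ≥0∞) :
    d ^ (-s) ≤
      1 + ∑' k, (Iic (dyadicScale k)).indicator (fun _ => dyadicScale (k + 1) ^ (-s)) d := by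
  have hanti : Antitone fun r : ℝ≥0∞ => r ^ (-s) := fun a b hab => by
    simpa only [ENNReal.rpow_neg] using ENNReal.inv_le_inv.2 (ENNReal.rpow_le_rpow hab hs.le)
  rcases le_total 1 d with h1 | h1
  · exact (hanti h1).trans (by simp)
  rcases eq_or_ne d 0 with rfl | h0
  · have h (k : ℕ) :
        1 ≤ (Iic (dyadicScale k)).indicator (fun _ => dyadicScale (k + 1) ^ (-s)) 0 := by
      simpa using hanti (dyadicScale_le_one (k + 1))
    refine le_top.trans (le_add_left ?_)
    rw [← ENNReal.tsum_const_eq_top_of_ne_zero (α := ℕ) one_ne_zero]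
    exact ENNReal.tsum_le_tsum h
  · obtain ⟨k, hk, hk'⟩ := exists_dyadicScale_succ_lt_le h0 h1
    refine le_add_left (le_trans ?_ (ENNReal.le_tsum k))
    simpa [hk'] using hanti hk.le

/-- The Riesz potential of order `s` of a measure; its integral is the `s`-energy. -/
noncomputable def potential {Z : Type*} [PseudoEMetricSpace Z] [MeasurableSpace Z] (s : ℝ)
    (μ : Measure Z) (x : Z) : ℝ≥0∞ :=
  ∫⁻ y, edist x y ^ (-s) ∂μ

lemma potential_le_of_measure_closedEBall_le {Z : Type*} [PseudoEMetricSpace Z]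
    [MeasurableSpace Z] [OpensMeasurableSpace Z] {μ : Measure Z} {x : Z}
    {s t : ℝ} {C : ℝ≥0∞} (hs : 0 < s)
    (h : ∀ k, μ (closedEBall x (dyadicScale k)) ≤ C * dyadicScale k ^ t) :
    potential s μ x ≤ μ univ + dyadicScale 1 ^ (-s) * C * ∑' k, dyadicScale k ^ (t - s) := by
  have hterm (k : ℕ) : dyadicScale (k + 1) ^ (-s) * μ (closedEBall x (dyadicScale k)) ≤
      dyadicScale 1 ^ (-s) * C * dyadicScale k ^ (t - s) := by
    rw [dyadicScale_add,
      ENNReal.mul_rpow_of_ne_zero (dyadicScale_ne_zero k) (dyadicScale_ne_zero 1),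
      sub_eq_add_neg, dyadicScale_rpow_add]
    calc _ ≤ dyadicScale k ^ (-s) * dyadicScale 1 ^ (-s) * (C * dyadicScale k ^ t) := by
          gcongr
          exact h k
      _ = _ := by ring
  calc potential s μ x
      ≤ ∫⁻ y, 1 + ∑' k, (closedEBall x (dyadicScale k)).indicator
          (fun _ => dyadicScale (k + 1) ^ (-s)) y ∂μ := by
        refine lintegral_mono fun y => (rpow_neg_le_one_add_tsum_indicator hs _).trans_eq ?_
        simp only [indicator, mem_closedEBall', mem_Iic]
    _ = μ univ + ∑' k, dyadicScale (k + 1) ^ (-s) * μ (closedEBall x (dyadicScale k)) := by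
        rw [lintegral_add_left measurable_const, lintegral_one, lintegral_tsum fun k =>
          (measurable_const.indicator isClosed_closedEBall.measurableSet).aemeasurable]
        simp only [lintegral_indicator_const isClosed_closedEBall.measurableSet]
    _ ≤ _ := by
        rw [← ENNReal.tsum_mul_left]
        exact add_le_add le_rfl (ENNReal.tsum_le_tsum hterm)

lemma energy_lt_top_of_measure_closedEBall_le {Z : Type*} [PseudoMetricSpace Z]
    [MeasurableSpace Z] [OpensMeasurableSpace Z] {μ : Measure Z} [IsFiniteMeasure μ]
    {s t : ℝ} {C : ℝ≥0∞} (hs : 0 < s) (hst : s < t) (hC : C ≠ ⊤)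
    (h : ∀ z k, μ (closedEBall z (dyadicScale k)) ≤ C * dyadicScale k ^ t) : energy s μ < ⊤ := by
  refine (lintegral_mono fun x => potential_le_of_measure_closedEBall_le hs (h x)).trans_lt ?_
  rw [lintegral_const]
  have := dyadicScale_rpow_ne_top 1 (-s)
  have := tsum_dyadicScale_rpow_ne_top (sub_pos.2 hst)
  finiteness

lemma energy_map_of_isometry {Y Z : Type*} [PseudoMetricSpace Y] [MeasurableSpace Y]
    [PseudoMetricSpace Z] [MeasurableSpace Z] {f : Y → Z} (hf : Isometry f)
    (hfm : MeasurableEmbedding f) (s : ℝ) (μ : Measure Y) : energy s (μ.map f) = energy s μ := by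
  simp only [energy, hfm.lintegral_map, hf.edist_eq]

lemma exists_measure_energy_lt_top {Z : Type*} [MetricSpace Z] [MeasurableSpace Z] [BorelSpace Z]
    {X : Set Z} (hX : AnalyticSet X) {s d : ℝ} (hs : 0 < s) (hsd : s < d)
    (h : dyadicContent d X ≠ 0) :
    ∃ μ : Measure Z, μ Xᶜ = 0 ∧ 0 < μ X ∧ μ X < ⊤ ∧ energy s μ < ⊤ := by
  obtain ⟨t, hst, htd⟩ := exists_between hsd
  obtain ⟨r, htr, hrd⟩ := exists_between htd
  obtain ⟨K, hKX, hK, hKr⟩ := exists_isCompact_subset_dyadicContent_ne_zero hX (by linarith) hrd h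
  have : CompactSpace K := isCompact_iff_compactSpace.1 hK
  obtain ⟨μ, hμ, C, hC, hμC⟩ := exists_isProbabilityMeasure_closedEBall_le (Y := K)
    (hs.trans hst).le (sub_pos.2 htr) (by
      rwa [add_sub_cancel, ← dyadicContent_image_of_isometry isometry_subtype_coe, image_univ,
        Subtype.range_coe])
  have hval : MeasurableEmbedding ((↑) : K → Z) :=
    .subtype_coe hK.isClosed.measurableSet
  have hpre : ((↑) : K → Z) ⁻¹' X = univ := eq_univ_of_forall fun x => hKX x.2
  refine ⟨μ.map (↑), ?_, ?_, ?_, ?_⟩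
  · simp [hval.map_apply, hpre]
  · simp [hval.map_apply, hpre]
  · simp [hval.map_apply, hpre]
  · rw [energy_map_of_isometry isometry_subtype_coe hval]
    exact energy_lt_top_of_measure_closedEBall_le hs hst hC hμC

end Energy

section DimensionBound

variable {Z : Type*} {s : ℝ}

section Potential

variable [PseudoEMetricSpace Z] [MeasurableSpace Z] [OpensMeasurableSpace Z] {μ : Measure Z}

lemma isClosed_setOf_potential_le (s : ℝ) (μ : Measure Z) (M : ℝ≥0∞) :
    IsClosed {x | potential s μ x ≤ M} := by
  refine isClosed_of_closure_subset fun x hx => ?_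
  obtain ⟨u, hu, hux⟩ := mem_closure_iff_seq_limit.1 hx
  have hlim (y : Z) : Tendsto (fun n => edist (u n) y ^ (-s)) atTop (𝓝 (edist x y ^ (-s))) :=
    (ENNReal.continuous_rpow_const.tendsto _).comp (hux.edist tendsto_const_nhds)
  calc potential s μ x = ∫⁻ y, liminf (fun n => edist (u n) y ^ (-s)) atTop ∂μ :=
        lintegral_congr fun y => (hlim y).liminf_eq.symm
    _ ≤ liminf (fun n => potential s μ (u n)) atTop :=
        lintegral_liminf_le fun n => measurable_edist_right.pow_const _
    _ ≤ M := liminf_le_of_le (by isBoundedDefault) fun b hb => by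
        obtain ⟨n, hn⟩ := hb.exists
        exact hn.trans (hu n)

lemma measurable_potential (s : ℝ) (μ : Measure Z) : Measurable (potential s μ) :=
  measurable_of_Iic fun M => (isClosed_setOf_potential_le s μ M).measurableSet

lemma ediam_rpow_neg_mul_le_potential (hs : 0 ≤ s) {S : Set Z} {x : Z} (hx : x ∈ S) :
    ediam S ^ (-s) * μ S ≤ potential s μ x := by
  refine le_trans (mul_le_mul_right (measure_mono fun y hy => ?_) _)
    (mul_meas_ge_le_lintegral (measurable_edist_right.pow_const (-s)) (ediam S ^ (-s)))
  simpa only [mem_ofPred_eq, ENNReal.rpow_neg, ENNReal.inv_le_inv] using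
    ENNReal.rpow_le_rpow (edist_le_ediam_of_mem hx hy) hs

end Potential

variable [EMetricSpace Z] [MeasurableSpace Z] [BorelSpace Z]

lemma restrict_setOf_potential_le_le_smul_hausdorffMeasure (hs : 0 ≤ s) (μ : Measure Z) {M : ℝ≥0∞}
    (hM0 : M ≠ 0) (hM : M ≠ ⊤) : μ.restrict {x | potential s μ x ≤ M} ≤ M • μH[s] := by
  refine le_trans (Measure.le_mkMetric (M • fun r => r ^ s) _ 1 one_pos fun S _ => ?_)
    (Measure.mkMetric_mono_smul hM hM0 EventuallyLE.rfl)
  rw [Measure.restrict_apply' (isClosed_setOf_potential_le s μ M).measurableSet]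
  rcases (S ∩ {x | potential s μ x ≤ M}).eq_empty_or_nonempty with h | ⟨x, hxS, hx⟩
  · simp [h]
  have := (ediam_rpow_neg_mul_le_potential hs hxS).trans hx
  rw [ENNReal.rpow_neg, mul_comm, ← div_eq_mul_inv,
    ENNReal.div_le_iff_le_mul (.inr hM) (.inr hM0)] at this
  exact (measure_mono inter_subset_left).trans this

lemma hausdorffMeasure_eq_zero_of_dyadicContent_eq_zero (hs : 0 < s) {A : Set Z}
    (h : dyadicContent s A = 0) : μH[s] A = 0 := by
  choose F κ hcov hF hsum using fun n => exists_cover_of_dyadicContent_lt hs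
    (h.trans_lt (pos_iff_ne_zero.2 (dyadicScale_rpow_ne_zero n s)))
  have hdiam (n i : ℕ) : ediam (F n i) ≤ dyadicScale n := (hF n i).trans <|
    (ENNReal.rpow_le_rpow_iff hs).1 <|
      (ENNReal.le_tsum (f := fun i => dyadicScale (κ n i) ^ s) i).trans (hsum n).le
  have hlim : Tendsto dyadicScale atTop (𝓝 0) := by
    simpa only [ENNReal.rpow_one] using tendsto_dyadicScale_rpow one_pos
  refine le_antisymm ?_ zero_le
  calc μH[s] A ≤ liminf (fun n => ∑' i, ediam (F n i) ^ s) atTop :=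
        Measure.hausdorffMeasure_le_liminf_tsum s A dyadicScale hlim F
          (.of_forall hdiam) (.of_forall hcov)
    _ ≤ liminf (fun n => dyadicScale n ^ s) atTop := liminf_le_liminf <| .of_forall fun n =>
        (ENNReal.tsum_le_tsum fun i => ENNReal.rpow_le_rpow (hF n i) hs.le).trans (hsum n).le
    _ = 0 := (tendsto_dyadicScale_rpow hs).liminf_eq

end DimensionBound

lemma le_dimH_of_energy_lt_top {Z : Type*} [MetricSpace Z] [MeasurableSpace Z] [BorelSpace Z]
    {X : Set Z} {s : ℝ} (hs : 0 ≤ s) {μ : Measure Z} (hX : μ X ≠ 0) (h : energy s μ < ⊤) :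
    ENNReal.ofReal s ≤ dimH X := by
  refine le_dimH_of_hausdorffMeasure_ne_zero (d := s.toNNReal) fun h0 => hX ?_
  rw [Real.coe_toNNReal s hs] at h0
  have hnull (n : ℕ) : μ (X ∩ {x | potential s μ x ≤ n + 1}) = 0 := by
    rw [← Measure.restrict_apply' (isClosed_setOf_potential_le s μ _).measurableSet]
    refine le_antisymm ((restrict_setOf_potential_le_le_smul_hausdorffMeasure hs μ (by simp)
      (by finiteness) X).trans ?_) zero_le
    simp [h0]
  have hfin : ∀ᵐ x ∂μ, potential s μ x < ⊤ := ae_lt_top (measurable_potential s μ) h.ne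
  refine measure_mono_null (fun x hx => ?_) (measure_union_null (measure_iUnion_null hnull) hfin)
  by_cases hxt : potential s μ x < ⊤
  · obtain ⟨n, hn⟩ := ENNReal.exists_nat_gt hxt.ne
    exact .inl (mem_iUnion.2 ⟨n, hx, hn.le.trans le_self_add⟩)
  · exact .inr hxt

theorem dimH_eq_iSup_energy_general {Z : Type*} [MetricSpace Z] [MeasurableSpace Z] [BorelSpace Z]
    {X : Set Z} (hX : AnalyticSet X) :
    dimH X = ⨆ (s : ℝ) (_ : 0 < s)
        (_ : ∃ μ : Measure Z, μ Xᶜ = 0 ∧ 0 < μ X ∧ μ X < ⊤ ∧ energy s μ < ⊤),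
      ENNReal.ofReal s := by
  refine le_antisymm (ENNReal.le_of_forall_nnreal_lt fun r hr => ?_)
    (iSup₂_le fun s hs => iSup_le fun ⟨μ, _, hpos, _, hen⟩ =>
      le_dimH_of_energy_lt_top hs.le hpos.ne' hen)
  rcases eq_or_ne r 0 with rfl | hr0
  · exact zero_le
  obtain ⟨d, hrd, hd⟩ := ENNReal.lt_iff_exists_nnreal_btwn.1 hr
  have hr0 : (0 : ℝ) < r := by positivity
  have hrd : (r : ℝ) < d := by exact_mod_cast hrd
  have hcontent : dyadicContent d X ≠ 0 := fun h => ENNReal.top_ne_zero <| by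
    rw [← hausdorffMeasure_of_lt_dimH hd,
      hausdorffMeasure_eq_zero_of_dyadicContent_eq_zero (hr0.trans hrd) h]
  have hμ := exists_measure_energy_lt_top hX hr0 hrd hcontent
  rw [← ENNReal.ofReal_coe_nnreal]
  exact le_iSup₂_of_le (r : ℝ) hr0 (le_iSup_of_le hμ le_rfl)

theorem dimH_eq_iSup_energy {Z : Type*}
    [MetricSpace Z] [CompleteSpace Z] [TopologicalSpace.SeparableSpace Z]
    [MeasurableSpace Z] [BorelSpace Z]
    (X : Set Z) (hX : MeasureTheory.AnalyticSet X) :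
    dimH X = ⨆ (s : ℝ) (_ : 0 < s)
        (_ : ∃ μ : Measure Z, μ Xᶜ = 0 ∧ 0 < μ X ∧ μ X < ⊤ ∧ energy s μ < ⊤),
      ENNReal.ofReal s :=
  dimH_eq_iSup_energy_general hX
end
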